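/- arXiv:1512.08345 — 4 statements merged into one kernel-verified Lean document; each statement's English description precedes it below -/
import Mathlib

section
/- The multiple zeta value ζ(α_1,...,α_n) equals the iterated integral over 0 < t_1 < t_2 < ... < t_m < 1 of ω_1(t_1) ⋯ ω_m(t_m), where m = α_1 + ... + α_n, ω_i(t) = dt/(1-t) if i ∈ {1, α_1+1, α_1+α_2+1, ..., α_1+⋯+α_{n-1}+1}, and ω_i(t) = dt/t otherwise. -/
open MeasureTheory Real

/-- Multiple zeta value `ζ(α₀,…,α_{n-1}) = ∑_{0<ℓ₀<⋯<ℓ_{n-1}} ∏ ℓᵢ^{-αᵢ}`. -/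
noncomputable def mzv {n : ℕ} (α : Fin n → ℕ) : ℝ :=
  ∑' ℓ : {ℓ : Fin n → ℕ // StrictMono ℓ ∧ ∀ i, 0 < ℓ i},
    ∏ i, ((ℓ.1 i : ℝ) ^ (α i))⁻¹

/-- The open ordered simplex `0 < t 0 < ⋯ < t (m-1) < 1` in `Fin m → ℝ`. -/
def orderedSimplex (m : ℕ) : Set (Fin m → ℝ) :=
  {t | StrictMono t ∧ ∀ i, t i ∈ Set.Ioo (0 : ℝ) 1}

open scoped ENNReal

/-- Ordered tuples of positive elements satisfying `Q`. -/
def ordSet {R : Type*} [Preorder R] [Zero R] (m : ℕ) (Q : R → Prop) : Set (Fin m → R) :=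
  {t | StrictMono t ∧ ∀ i, 0 < t i ∧ Q (t i)}

theorem snoc_mem_ordSet {R : Type*} [Preorder R] [Zero R] {m : ℕ} {Q : R → Prop}
    (hQ : ∀ a b, Q a → b < a → Q b) (p : Fin m → R) (a : R) :
    (Fin.snoc p a : Fin (m + 1) → R) ∈ ordSet (m + 1) Q ↔
      (0 < a ∧ Q a) ∧ p ∈ ordSet m (fun y => y < a) := by
  simp only [ordSet, Set.mem_ofPred_eq]
  constructor
  · rintro ⟨h1, h2⟩
    have hl := h2 (Fin.last m)
    simp only [Fin.snoc_last] at hl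
    refine ⟨hl, ?_, ?_⟩
    · intro i j hij
      have := h1 (Fin.castSucc_lt_castSucc_iff.2 hij)
      simpa only [Fin.snoc_castSucc] using this
    · intro i
      have h3 := (h2 i.castSucc).1
      have h4 := h1 (Fin.castSucc_lt_last i)
      simp only [Fin.snoc_castSucc, Fin.snoc_last] at h3 h4
      exact ⟨h3, h4⟩
  · rintro ⟨h0, h1, h2⟩
    constructor
    · intro i j hij
      induction j using Fin.lastCases with
      | last =>
        induction i using Fin.lastCases with
        | last => exact absurd hij (lt_irrefl _)
        | cast i => simpa only [Fin.snoc_castSucc, Fin.snoc_last] using (h2 i).2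
      | cast j =>
        induction i using Fin.lastCases with
        | last => exact absurd (hij.trans (Fin.castSucc_lt_last j)) (lt_irrefl _)
        | cast i =>
          simp only [Fin.snoc_castSucc]
          exact h1 (Fin.castSucc_lt_castSucc_iff.1 hij)
    · intro i
      induction i using Fin.lastCases with
      | last => simpa only [Fin.snoc_last] using h0
      | cast i =>
        simp only [Fin.snoc_castSucc]
        exact ⟨(h2 i).1, hQ _ _ h0.2 (h2 i).2⟩

/-- Coefficients of the power series of the iterated integrals. -/
noncomputable def cf (b : ℕ → Prop) : ℕ → ℕ → ℝ≥0∞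
  | 0, k => if k = 0 then 1 else 0
  | m + 1, k => open Classical in
      if b m then (∑ j ∈ Finset.range k, cf b m j) * (k : ℝ≥0∞)⁻¹
      else cf b m k * (k : ℝ≥0∞)⁻¹

theorem cf_zero (b : ℕ → Prop) (hb : b 0) (m : ℕ) : cf b (m + 1) 0 = 0 := by
  induction m with
  | zero => simp [cf, hb]
  | succ m ih =>
    rw [cf]
    split_ifs <;> simp [ih]

/-- The integrand factor. -/
noncomputable def fm (b : ℕ → Prop) (i : ℕ) (t : ℝ) : ℝ := open Classical in
  if b i then (1 - t)⁻¹ else t⁻¹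

theorem fm_measurable (b : ℕ → Prop) (i : ℕ) : Measurable (fm b i) := by
  unfold fm
  split_ifs
  · exact (measurable_const.sub measurable_id).inv
  · exact measurable_inv

theorem ordSet_measurable (m : ℕ) (x : ℝ) :
    MeasurableSet (ordSet m (fun y : ℝ => y < x)) := by
  have : ordSet m (fun y : ℝ => y < x) =
      (⋂ i : Fin m, ⋂ j : Fin m, ⋂ _ : i < j, {t : Fin m → ℝ | t i < t j}) ∩
      ⋂ i : Fin m, ({t | 0 < t i} ∩ {t | t i < x}) := by
    ext t
    simp [ordSet, StrictMono]
  rw [this]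
  refine MeasurableSet.inter ?_ ?_
  · refine MeasurableSet.iInter fun i => MeasurableSet.iInter fun j => MeasurableSet.iInter fun _ => ?_
    exact measurableSet_lt (measurable_pi_apply i) (measurable_pi_apply j)
  · refine MeasurableSet.iInter fun i => MeasurableSet.inter ?_ ?_
    · exact measurableSet_lt measurable_const (measurable_pi_apply i)
    · exact measurableSet_lt (measurable_pi_apply i) measurable_const

/-- The iterated integral with upper limit `x`. -/
noncomputable def II (b : ℕ → Prop) (m : ℕ) (x : ℝ) : ℝ≥0∞ :=
  ∫⁻ t in ordSet m (fun y : ℝ => y < x), ∏ i : Fin m, ENNReal.ofReal (fm b i (t i))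

theorem lintegral_snoc (m : ℕ) (F : (Fin (m + 1) → ℝ) → ℝ≥0∞) (hF : Measurable F) :
    ∫⁻ t, F t = ∫⁻ a : ℝ, ∫⁻ p : Fin m → ℝ, F (Fin.snoc p a) := by
  have h := (volume_preserving_piFinSuccAbove (fun _ : Fin (m + 1) => ℝ) (Fin.last m)).symm
  rw [← h.lintegral_comp_emb (MeasurableEquiv.measurableEmbedding _) F]
  rw [Measure.volume_eq_prod, lintegral_prod]
  · simp [MeasurableEquiv.piFinSuccAbove, Fin.insertNthEquiv, Fin.insertNth_last']
  · exact (hF.comp (MeasurableEquiv.measurable _)).aemeasurable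

theorem II_succ (b : ℕ → Prop) (m : ℕ) (x : ℝ) :
    II b (m + 1) x = ∫⁻ t in Set.Ioo 0 x, ENNReal.ofReal (fm b m t) * II b m t := by
  unfold II
  rw [← lintegral_indicator (ordSet_measurable _ _), lintegral_snoc]
  · rw [← lintegral_indicator measurableSet_Ioo]
    refine lintegral_congr fun a => ?_
    by_cases ha : a ∈ Set.Ioo 0 x
    · rw [Set.indicator_of_mem ha, ← lintegral_indicator (ordSet_measurable _ _),
        ← lintegral_const_mul']
      · refine lintegral_congr fun p => ?_
        by_cases hp : p ∈ ordSet m (fun y : ℝ => y < a)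
        · rw [Set.indicator_of_mem hp, Set.indicator_of_mem, Fin.prod_univ_castSucc, mul_comm]
          · simp
          · rw [snoc_mem_ordSet (fun a b h1 h2 => lt_trans h2 h1)]
            exact ⟨ha, hp⟩
        · rw [Set.indicator_of_notMem hp, Set.indicator_of_notMem, mul_zero]
          rw [snoc_mem_ordSet (fun a b h1 h2 => lt_trans h2 h1)]
          exact fun h => hp h.2
      · exact ENNReal.ofReal_ne_top
    · rw [Set.indicator_of_notMem ha]
      rw [← lintegral_zero (μ := (volume : Measure (Fin m → ℝ)))]
      refine lintegral_congr fun p => ?_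
      rw [Set.indicator_of_notMem]
      rw [snoc_mem_ordSet (fun a b h1 h2 => lt_trans h2 h1)]
      exact fun h => ha h.1
  · refine Measurable.indicator ?_ (ordSet_measurable _ _)
    refine Finset.measurable_prod _ fun i _ => ?_
    exact ((fm_measurable b i).comp (measurable_pi_apply i)).ennreal_ofReal

theorem lint_pow (k : ℕ) (x : ℝ) (hx : 0 < x) :
    ∫⁻ t in Set.Ioo 0 x, ENNReal.ofReal t ^ k =
      ENNReal.ofReal x ^ (k + 1) * ((k + 1 : ℕ) : ℝ≥0∞)⁻¹ := by
  have h1 : ∫⁻ t in Set.Ioo 0 x, ENNReal.ofReal t ^ k =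
      ∫⁻ t in Set.Ioo 0 x, ENNReal.ofReal (t ^ k) := by
    refine setLIntegral_congr_fun measurableSet_Ioo fun t ht => ?_
    exact (ENNReal.ofReal_pow ht.1.le k).symm
  rw [h1, ← ofReal_integral_eq_lintegral_ofReal]
  · rw [← integral_Ioc_eq_integral_Ioo, ← intervalIntegral.integral_of_le hx.le, integral_pow,
      div_eq_mul_inv, ENNReal.ofReal_mul (by simpa using pow_nonneg hx.le (k + 1))]
    congr 1
    · rw [← ENNReal.ofReal_pow hx.le]; simp
    · rw [ENNReal.ofReal_inv_of_pos (by positivity)]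
      congr 1
      rw [← ENNReal.ofReal_natCast]; push_cast; rfl
  · have : IntegrableOn (fun t : ℝ => t ^ k) (Set.Icc 0 x) :=
      (continuous_pow k).continuousOn.integrableOn_Icc
    exact this.mono_set Set.Ioo_subset_Icc_self
  · refine (ae_restrict_iff' measurableSet_Ioo).2 (Filter.Eventually.of_forall fun t ht => ?_)
    exact pow_nonneg ht.1.le k

theorem tsum_shift (k : ℕ) (f : ℕ → ℝ≥0∞) :
    ∑' i, f (i + k + 1) = ∑' K, if k < K then f K else 0 := by
  have hinj : Function.Injective (fun i : ℕ => i + k + 1) := fun a b h => by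
    simpa using h
  rw [← hinj.tsum_eq (f := fun K => if k < K then f K else 0)]
  · refine tsum_congr fun i => ?_
    rw [if_pos (by omega)]
  · intro K hK
    have : k < K := by
      by_contra h
      exact hK (if_neg h)
    exact ⟨K - k - 1, by simp only; omega⟩

theorem range_sum_tsum (K : ℕ) (f : ℕ → ℝ≥0∞) :
    ∑ k ∈ Finset.range K, f k = ∑' k, if k < K then f k else 0 := by
  rw [tsum_eq_sum (s := Finset.range K)]
  · exact Finset.sum_congr rfl fun k hk => by rw [if_pos (Finset.mem_range.1 hk)]
  · intro k hk
    rw [if_neg (by simpa using hk)]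

theorem II_eq (b : ℕ → Prop) (hb : b 0) (m : ℕ) : ∀ x : ℝ, 0 < x → x ≤ 1 →
    II b m x = ∑' k, cf b m k * ENNReal.ofReal x ^ k := by
  induction m with
  | zero =>
    intro x hx hx1
    rw [tsum_eq_single 0 (by intro k hk; simp [cf, hk])]
    have : ordSet 0 (fun y : ℝ => y < x) = Set.univ := by
      ext t; simp [ordSet, StrictMono]
    simp [II, cf, this, volume_pi]
  | succ m ih =>
    intro x hx hx1
    rw [II_succ]
    have hmp : ∀ k : ℕ, Measurable fun t : ℝ => ENNReal.ofReal t ^ k :=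
      fun k => ENNReal.measurable_ofReal.pow_const k
    by_cases hbm : b m
    · have h1 : ∫⁻ t in Set.Ioo 0 x, ENNReal.ofReal (fm b m t) * II b m t =
          ∫⁻ t in Set.Ioo 0 x, ∑' k, ∑' i, cf b m k * ENNReal.ofReal t ^ (i + k) := by
        refine setLIntegral_congr_fun measurableSet_Ioo fun t ht => ?_
        have ht1 : t < 1 := ht.2.trans_le hx1
        rw [ih t ht.1 ht1.le, ← ENNReal.tsum_mul_left]
        refine tsum_congr fun k => ?_
        have : ENNReal.ofReal (fm b m t) = ∑' i : ℕ, ENNReal.ofReal t ^ i := by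
          rw [ENNReal.tsum_geometric, fm, if_pos hbm, ENNReal.ofReal_inv_of_pos (by linarith),
            ENNReal.ofReal_sub _ ht.1.le, ENNReal.ofReal_one]
        rw [this, ← ENNReal.tsum_mul_right]
        refine tsum_congr fun i => ?_
        rw [pow_add]; ring
      rw [h1, lintegral_tsum]
      · have h2 : ∀ k, ∫⁻ t in Set.Ioo 0 x, ∑' i, cf b m k * ENNReal.ofReal t ^ (i + k) =
            ∑' K, if k < K then cf b m k * (ENNReal.ofReal x ^ K * (K : ℝ≥0∞)⁻¹) else 0 := by
          intro k
          rw [lintegral_tsum, ← tsum_shift k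
            (fun K => cf b m k * (ENNReal.ofReal x ^ K * (K : ℝ≥0∞)⁻¹))]
          · refine tsum_congr fun i => ?_
            rw [lintegral_const_mul _ (hmp _), lint_pow _ _ hx]
          · exact fun i => ((hmp _).const_mul _).aemeasurable
        simp_rw [h2]
        rw [ENNReal.tsum_comm]
        refine tsum_congr fun K => ?_
        rw [cf, if_pos hbm, ← range_sum_tsum K
          (fun k => cf b m k * (ENNReal.ofReal x ^ K * (K : ℝ≥0∞)⁻¹)), ← Finset.sum_mul]
        ring
      · exact fun k => (Measurable.ennreal_tsum fun i => (hmp _).const_mul _).aemeasurable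
    · obtain ⟨m, rfl⟩ : ∃ m', m = m' + 1 := by
        cases m with
        | zero => exact absurd hb hbm
        | succ m => exact ⟨m, rfl⟩
      have h1 : ∫⁻ t in Set.Ioo 0 x, ENNReal.ofReal (fm b (m + 1) t) * II b (m + 1) t =
          ∫⁻ t in Set.Ioo 0 x, ∑' k, cf b (m + 1) (k + 1) * ENNReal.ofReal t ^ k := by
        refine setLIntegral_congr_fun measurableSet_Ioo fun t ht => ?_
        have ht1 : t < 1 := ht.2.trans_le hx1
        rw [ih t ht.1 ht1.le, tsum_eq_zero_add' ENNReal.summable, cf_zero b hb, zero_mul, zero_add,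
          ← ENNReal.tsum_mul_left]
        refine tsum_congr fun k => ?_
        rw [fm, if_neg hbm, ENNReal.ofReal_inv_of_pos ht.1, pow_succ]
        have h0 : ENNReal.ofReal t ≠ 0 := by simpa using ht.1
        calc _ = cf b (m + 1) (k + 1) * ENNReal.ofReal t ^ k *
              ((ENNReal.ofReal t)⁻¹ * ENNReal.ofReal t) := by ring
          _ = _ := by rw [ENNReal.inv_mul_cancel h0 ENNReal.ofReal_ne_top, mul_one]
      rw [h1, lintegral_tsum, tsum_eq_zero_add' (f := fun k => cf b (m + 1 + 1) k * _)
        ENNReal.summable, cf_zero b hb, zero_mul, zero_add]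
      · refine tsum_congr fun k => ?_
        rw [lintegral_const_mul _ (hmp _), lint_pow _ _ hx, cf.eq_2 b (k + 1) (m + 1), if_neg hbm]
        ring
      · exact fun k => ((hmp _).const_mul _).aemeasurable

/-- Truncated multiple sums. -/
noncomputable def TT (a : ℕ → ℕ) (j : ℕ) (Q : ℕ → Prop) : ℝ≥0∞ :=
  ∑' l : Fin j → ℕ, (ordSet j Q).indicator
    (fun l => ∏ i : Fin j, ((l i : ℝ≥0∞) ^ a i)⁻¹) l

theorem TT_succ (a : ℕ → ℕ) (j : ℕ) (Q : ℕ → Prop) (hQ : ∀ a b, Q a → b < a → Q b) :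
    TT a (j + 1) Q = ∑' k : ℕ, {k | 0 < k ∧ Q k}.indicator
      (fun k => ((k : ℝ≥0∞) ^ a j)⁻¹ * TT a j (fun y => y < k)) k := by
  unfold TT
  rw [← (Fin.snocEquiv (fun _ : Fin (j + 1) => ℕ)).tsum_eq, ENNReal.tsum_prod']
  refine tsum_congr fun k => ?_
  by_cases hk : k ∈ {k | 0 < k ∧ Q k}
  · rw [Set.indicator_of_mem hk, ← ENNReal.tsum_mul_left]
    refine tsum_congr fun p => ?_
    simp only [Fin.snocEquiv, Equiv.coe_fn_mk]
    by_cases hp : p ∈ ordSet j (fun y : ℕ => y < k)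
    · rw [Set.indicator_of_mem hp, Set.indicator_of_mem, Fin.prod_univ_castSucc, mul_comm]
      · simp
      · exact (snoc_mem_ordSet hQ p k).2 ⟨hk, hp⟩
    · rw [Set.indicator_of_notMem hp, Set.indicator_of_notMem, mul_zero]
      exact fun h => hp ((snoc_mem_ordSet hQ p k).1 h).2
  · rw [Set.indicator_of_notMem hk, ENNReal.tsum_eq_zero]
    intro p
    rw [Set.indicator_of_notMem]
    exact fun h => hk ((snoc_mem_ordSet hQ p k).1 h).1

theorem cf_block (b : ℕ → Prop) (M s : ℕ) (hM : b M) (hs : ∀ r, 1 ≤ r → r < s + 1 → ¬ b (M + r))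
    (k : ℕ) : cf b (M + (s + 1)) k = (∑ j ∈ Finset.range k, cf b M j) * ((k : ℝ≥0∞) ^ (s + 1))⁻¹ := by
  induction s with
  | zero => simp [cf, hM]
  | succ s ih =>
    rw [← add_assoc M, cf, if_neg (hs (s + 1) (by omega) (by omega)),
      ih (fun r h1 h2 => hs r h1 (by omega)), mul_assoc]
    congr 1
    rw [pow_succ (k : ℝ≥0∞) (s + 1), ENNReal.mul_inv]
    · right; exact ENNReal.natCast_ne_top k
    · left; exact ENNReal.pow_ne_top (ENNReal.natCast_ne_top k)

theorem cf_TT (a : ℕ → ℕ) (ha : ∀ i, 1 ≤ a i) (N : ℕ) (b : ℕ → Prop)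
    (hbd : ∀ i, b i ↔ ∃ j < N, i = ∑ r ∈ Finset.range j, a r) (j : ℕ) (hj : j ≤ N) :
    (∀ k, 0 < k → TT a j (fun y => y < k) =
      ∑ l ∈ Finset.range k, cf b (∑ r ∈ Finset.range j, a r) l) ∧
    (j < N → ∀ k, cf b (∑ r ∈ Finset.range (j + 1), a r) k =
      {k : ℕ | 0 < k}.indicator
      (fun k => ((k : ℝ≥0∞) ^ a j)⁻¹ * TT a j (fun y => y < k)) k) := by
  have key : ∀ j < N, (∀ k, 0 < k → TT a j (fun y => y < k) =
      ∑ l ∈ Finset.range k, cf b (∑ r ∈ Finset.range j, a r) l) →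
      ∀ k, cf b (∑ r ∈ Finset.range (j + 1), a r) k =
      {k : ℕ | 0 < k}.indicator
      (fun k => ((k : ℝ≥0∞) ^ a j)⁻¹ * TT a j (fun y => y < k)) k := by
    intro j hj h k
    obtain ⟨s, hs⟩ : ∃ s, a j = s + 1 := ⟨a j - 1, by have := ha j; omega⟩
    rw [Finset.sum_range_succ, hs, cf_block]
    · rcases Nat.eq_zero_or_pos k with rfl | hk
      · simp
      · rw [Set.indicator_of_mem (by exact hk), h k hk, mul_comm]
    · exact (hbd _).2 ⟨j, hj, rfl⟩
    · intro r h1 h2 hb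
      obtain ⟨i, hi, he⟩ := (hbd _).1 hb
      have mono : ∀ u v, u ≤ v → ∑ r ∈ Finset.range u, a r ≤ ∑ r ∈ Finset.range v, a r :=
        fun u v huv => Finset.sum_le_sum_of_subset (Finset.range_mono huv)
      rcases Nat.lt_or_ge j i with h3 | h3
      · have := mono (j + 1) i h3
        rw [Finset.sum_range_succ] at this
        omega
      · have := mono i j h3
        omega
  suffices h : ∀ k, 0 < k → TT a j (fun y => y < k) =
      ∑ l ∈ Finset.range k, cf b (∑ r ∈ Finset.range j, a r) l from ⟨h, fun hj => key j hj h⟩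
  induction j with
  | zero =>
    intro k hk
    have : ordSet 0 (fun y : ℕ => y < k) = Set.univ := by
      ext t; simp [ordSet, StrictMono]
    simp [TT, this, cf, hk]
  | succ j ih =>
    intro k hk
    rw [TT_succ _ _ _ (fun a b h1 h2 => lt_trans h2 h1), range_sum_tsum]
    refine tsum_congr fun l => ?_
    rw [key j hj (ih (by omega)) l]
    simp only [Set.indicator, Set.mem_ofPred_eq]
    by_cases h1 : 0 < l <;> by_cases h2 : l < k <;> simp [h1, h2]

theorem mzv_eq_iterated_integral (n : ℕ) (α : Fin (n + 1) → ℕ)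
    (hpos : ∀ i, 1 ≤ α i) (hlast : 2 ≤ α (Fin.last n)) :
    mzv α =
      ∫ t in orderedSimplex (∑ i, α i),
        ∏ i : Fin (∑ i, α i),
          if ∃ j : Fin (n + 1), (i : ℕ) = ∑ r ∈ Finset.Iio j, α r
          then (1 - t i)⁻¹ else (t i)⁻¹ := by
  set a : ℕ → ℕ := fun i => if h : i < n + 1 then α ⟨i, h⟩ else 1 with ha_def
  have ha : ∀ i, 1 ≤ a i := by
    intro i
    simp only [ha_def]
    split_ifs
    · exact hpos _
    · exact le_rfl
  have haα : ∀ i : Fin (n + 1), a i = α i := fun i => dif_pos i.2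
  have hsum : ∑ i, α i = ∑ r ∈ Finset.range (n + 1), a r := by
    rw [Finset.sum_range]
    exact Finset.sum_congr rfl fun i _ => (haα i).symm
  have hIio : ∀ j : Fin (n + 1), ∑ r ∈ Finset.Iio j, α r = ∑ r ∈ Finset.range j, a r := by
    intro j
    have : Finset.range (j : ℕ) = (Finset.Iio j).map Fin.valEmbedding := by
      rw [Fin.map_valEmbedding_Iio]; ext; simp
    rw [this, Finset.sum_map]
    exact Finset.sum_congr rfl fun i _ => (haα i).symm
  set b : ℕ → Prop := fun i => ∃ j : Fin (n + 1), i = ∑ r ∈ Finset.Iio j, α r with hb_def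
  have hbd : ∀ i, b i ↔ ∃ j < n + 1, i = ∑ r ∈ Finset.range j, a r := by
    intro i
    simp only [hb_def]
    constructor
    · rintro ⟨j, hj⟩
      exact ⟨j, j.2, by rw [hj, hIio]⟩
    · rintro ⟨j, hj, he⟩
      exact ⟨⟨j, hj⟩, by rw [he, hIio]⟩
  have hb0 : b 0 := (hbd 0).2 ⟨0, by omega, by simp⟩
  have hS : orderedSimplex (∑ i, α i) = ordSet (∑ i, α i) (fun y : ℝ => y < 1) := rfl
  have hsS : {l : Fin (n + 1) → ℕ | StrictMono l ∧ ∀ i, 0 < l i} =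
      ordSet (n + 1) (fun _ : ℕ => True) := by
    ext l; simp [ordSet]
  -- the sum side
  have hL : mzv α = (TT a (n + 1) (fun _ => True)).toReal := by
    unfold mzv TT
    rw [← hsS, ← tsum_subtype {l : Fin (n + 1) → ℕ | StrictMono l ∧ ∀ i, 0 < l i}
      (fun l => ∏ i : Fin (n + 1), ((l i : ℝ≥0∞) ^ a i)⁻¹), ENNReal.tsum_toReal_eq]
    · refine tsum_congr fun l => ?_
      rw [ENNReal.toReal_prod]
      refine Finset.prod_congr rfl fun i _ => ?_
      simp [haα i]
    · intro l
      refine ENNReal.prod_ne_top fun i _ => ?_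
      refine ENNReal.inv_ne_top.2 (pow_ne_zero _ ?_)
      exact_mod_cast (l.2.2 i).ne'
  have hT : TT a (n + 1) (fun _ => True) = II b (∑ i, α i) 1 := by
    rw [II_eq b hb0 _ 1 one_pos le_rfl, TT_succ _ _ _ (fun _ _ _ _ => trivial)]
    refine tsum_congr fun k => ?_
    rw [hsum, (cf_TT a ha (n + 1) b hbd n (by omega)).2 (by omega) k]
    simp
  rw [hL, hT, hS]
  have hpt : ∀ t ∈ ordSet (∑ i, α i) (fun y : ℝ => y < 1), 
      ∀ i : Fin (∑ i, α i), 0 ≤ fm b i (t i) := by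
    intro t ht i
    have := ht.2 i
    simp only at this
    unfold fm
    split_ifs
    · exact inv_nonneg.2 (by linarith)
    · exact inv_nonneg.2 this.1.le
  have hfm : ∀ t : Fin (∑ i, α i) → ℝ, (∏ i : Fin (∑ i, α i),
          if ∃ j : Fin (n + 1), (i : ℕ) = ∑ r ∈ Finset.Iio j, α r
          then (1 - t i)⁻¹ else (t i)⁻¹) = ∏ i : Fin (∑ i, α i), fm b i (t i) := by
    intro t
    refine Finset.prod_congr rfl fun i _ => ?_
    unfold fm
    congr 1
  simp_rw [hfm]
  rw [integral_eq_lintegral_of_nonneg_ae]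
  · unfold II
    congr 1
    refine setLIntegral_congr_fun (ordSet_measurable _ _) fun t ht => ?_
    exact (ENNReal.ofReal_prod_of_nonneg fun i _ => hpt t ht i).symm
  · refine (ae_restrict_iff' (ordSet_measurable _ _)).2 (Filter.Eventually.of_forall fun t ht => ?_)
    exact Finset.prod_nonneg fun i _ => hpt t ht i
  · refine Measurable.aestronglyMeasurable ?_
    refine Finset.measurable_prod _ fun i _ => ?_
    exact (fm_measurable b i).comp (measurable_pi_apply i)
end

section
/- Sum formula for multiple zeta values: for integers n ≥ 1 and m ≥ n+1, the sum of ζ(α_1,...,α_n) over all tuples of positive integers (α_1,...,α_n) with α_1 + ... + α_n = m and α_n ≥ 2 equals ζ(m). -/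
open Filter Topology

namespace SumFormula

/-- Index tuples. -/
abbrev L (n : ℕ) := {ℓ : Fin n → ℕ // StrictMono ℓ ∧ ∀ i, 0 < ℓ i}

/-- Last entry, `0` for the empty tuple. -/
def lst {n : ℕ} (ℓ : Fin n → ℕ) : ℕ := Finset.univ.sup ℓ

lemma lst_zero (ℓ : Fin 0 → ℕ) : lst ℓ = 0 := by simp [lst]

lemma lst_succ {n : ℕ} (ℓ : Fin (n+1) → ℕ) (h : StrictMono ℓ) : lst ℓ = ℓ (Fin.last n) := by
  apply le_antisymm
  · exact Finset.sup_le fun i _ => h.monotone (Fin.le_last i)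
  · exact Finset.le_sup (f := ℓ) (Finset.mem_univ _)

lemma le_lst {n : ℕ} (ℓ : Fin n → ℕ) (i : Fin n) : ℓ i ≤ lst ℓ :=
  Finset.le_sup (f := ℓ) (Finset.mem_univ _)

lemma snoc_mem {n : ℕ} (ℓ : L n) (i : ℕ) :
    StrictMono (Fin.snoc (α := fun _ => ℕ) ℓ.1 (lst ℓ.1 + 1 + i)) ∧
      ∀ j, 0 < (Fin.snoc (α := fun _ => ℕ) ℓ.1 (lst ℓ.1 + 1 + i) : Fin (n+1) → ℕ) j := by
  constructor
  · intro a b hab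
    induction b using Fin.lastCases with
    | last =>
      induction a using Fin.lastCases with
      | last => exact absurd hab (lt_irrefl _)
      | cast a =>
        simp only [Fin.snoc_castSucc, Fin.snoc_last]
        have := le_lst ℓ.1 a
        omega
    | cast b =>
      induction a using Fin.lastCases with
      | last => exact absurd hab (not_lt.2 (Fin.le_last _))
      | cast a =>
        simp only [Fin.snoc_castSucc]
        exact ℓ.2.1 (by simpa using hab)
  · intro j
    induction j using Fin.lastCases with
    | last => simp only [Fin.snoc_last]; omega
    | cast a => simp only [Fin.snoc_castSucc]; exact ℓ.2.2 a

/-- Peeling off the last entry. -/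
def eqv (n : ℕ) : L n × ℕ ≃ L (n+1) where
  toFun p := ⟨Fin.snoc (α := fun _ => ℕ) p.1.1 (lst p.1.1 + 1 + p.2), snoc_mem p.1 p.2⟩
  invFun ℓ := (⟨fun i => ℓ.1 i.castSucc, fun a b h => ℓ.2.1 (by simpa using h),
    fun i => ℓ.2.2 _⟩, ℓ.1 (Fin.last n) - 1 - lst (fun i : Fin n => ℓ.1 i.castSucc))
  left_inv p := by
    rcases p with ⟨ℓ, i⟩
    ext1
    · ext j; simp
    · simp only [Fin.snoc_castSucc, Fin.snoc_last]
      change lst ℓ.1 + 1 + i - 1 - lst ℓ.1 = i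
      omega
  right_inv ℓ := by
    have hl : lst (fun i : Fin n => ℓ.1 i.castSucc) < ℓ.1 (Fin.last n) := by
      refine (Finset.sup_lt_iff (ℓ.2.2 _)).2 fun i _ => ℓ.2.1 (Fin.castSucc_lt_last i)
    ext j
    induction j using Fin.lastCases with
    | last => simp only [Fin.snoc_last]; omega
    | cast a => simp only [Fin.snoc_castSucc]

open scoped ENNReal

lemma tsum_pair {α β : Type*} (f : α × β → ℝ≥0∞) : ∑' p, f p = ∑' a, ∑' b, f (a, b) :=
  ENNReal.tsum_prod (f := fun a b => f (a, b))

lemma tsum_L_succ (n : ℕ) (w G : ℕ → ℝ≥0∞) :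
    ∑' ℓ : L (n+1), (∏ i, w (ℓ.1 i)) * G (lst ℓ.1) =
    ∑' ℓ : L n, (∏ i, w (ℓ.1 i)) * ∑' i, w (lst ℓ.1 + 1 + i) * G (lst ℓ.1 + 1 + i) := by
  rw [← (eqv n).tsum_eq, tsum_pair]
  refine tsum_congr fun ℓ => ?_
  rw [← ENNReal.tsum_mul_left]
  refine tsum_congr fun i => ?_
  rw [lst_succ _ (eqv n (ℓ, i)).2.1, Fin.prod_univ_castSucc]
  simp [eqv, mul_assoc]

/-- The connector. -/
noncomputable def C (x : ℝ) (m n : ℕ) : ℝ :=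
  ∏ j ∈ Finset.range n, ((j : ℝ) + 1 - x) / (m + j + 1 - x)

lemma C_pos {x : ℝ} (h1 : x < 1) (m n : ℕ) : 0 < C x m n := by
  refine Finset.prod_pos fun j _ => ?_
  have : (0:ℝ) ≤ j := by positivity
  have : (0:ℝ) ≤ m := by positivity
  apply div_pos <;> linarith

lemma C_succ_right (x : ℝ) (m n : ℕ) :
    C x m (n+1) = C x m n * (((n : ℝ) + 1 - x) / (m + n + 1 - x)) := by
  rw [C, Finset.prod_range_succ]; rfl

lemma C_succ_left {x : ℝ} (h1 : x < 1) (m n : ℕ) :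
    C x (m+1) n = C x m n * (((m : ℝ) + 1 - x) / (m + n + 1 - x)) := by
  have hm : (0:ℝ) ≤ m := by positivity
  induction n with
  | zero =>
    have : (m : ℝ) + 1 - x ≠ 0 := by linarith
    simp [C, this]
  | succ n ih =>
    have hn : (0:ℝ) ≤ n := by positivity
    rw [C_succ_right, C_succ_right, ih]
    have e1 : (m : ℝ) + n + 1 - x ≠ 0 := by linarith
    have e2 : (m : ℝ) + 1 + n + 1 - x ≠ 0 := by linarith
    have e3 : (m : ℝ) + (n + 1) + 1 - x ≠ 0 := by linarith
    push_cast
    field_simp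
    ring

lemma C_zero_right (x : ℝ) (m : ℕ) : C x m 0 = 1 := by simp [C]

lemma C_zero_left {x : ℝ} (h1 : x < 1) (n : ℕ) : C x 0 n = 1 := by
  refine Finset.prod_eq_one fun j _ => ?_
  have : (0:ℝ) ≤ j := by positivity
  have : (j : ℝ) + 1 - x ≠ 0 := by linarith
  simp [this]

lemma C_comm {x : ℝ} (h1 : x < 1) (m n : ℕ) : C x m n = C x n m := by
  induction m with
  | zero => rw [C_zero_left h1, C_zero_right]
  | succ m ih => rw [C_succ_left h1, C_succ_right, ih, add_comm (m:ℝ) n]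

lemma C_le {x : ℝ} (h1 : x < 1) (m n : ℕ) : C x m (n+1) ≤ (1 - x) / (m + 1 - x) := by
  have hm : (0:ℝ) ≤ m := by positivity
  induction n with
  | zero => simp [C]
  | succ n ih =>
    rw [C_succ_right]
    refine le_trans (mul_le_of_le_one_right (C_pos h1 _ _).le ?_) ih
    have hn : (0:ℝ) ≤ n := by positivity
    push_cast
    rw [div_le_one] <;> linarith

lemma C_tendsto {x : ℝ} (h1 : x < 1) (n : ℕ) :
    Tendsto (fun m => C x m (n+1)) atTop (𝓝 0) := by
  refine squeeze_zero (fun m => (C_pos h1 _ _).le) (fun m => C_le h1 m n) ?_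
  refine Tendsto.div_atTop tendsto_const_nhds ?_
  have : Tendsto (fun m : ℕ => (m : ℝ) + (1 - x)) atTop atTop :=
    tendsto_atTop_add_const_right _ _ tendsto_natCast_atTop_atTop
  simpa [add_sub_assoc] using this

/-- Transport relation. -/
lemma transport_real {x : ℝ} (h1 : x < 1) (a N : ℕ) :
    HasSum (fun i : ℕ => 1 / (((a + 1 + i : ℕ) : ℝ) - x) * C x (a + 1 + i) (N+1))
      (C x a (N+1) * (1 / ((N+1 : ℕ) : ℝ))) := by
  have key : ∀ i : ℕ, 1 / (((a + 1 + i : ℕ) : ℝ) - x) * C x (a + 1 + i) (N+1) =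
      C x (a + i) (N+1) * (1 / ((N+1 : ℕ) : ℝ)) - C x (a + (i+1)) (N+1) * (1 / ((N+1 : ℕ) : ℝ)) := by
    intro i
    rw [show a + 1 + i = (a + i) + 1 by ring, show a + (i + 1) = (a + i) + 1 by ring,
      C_succ_left h1]
    generalize a + i = k
    have hk : (0:ℝ) ≤ k := by positivity
    have hN : (0:ℝ) ≤ N := by positivity
    have e1 : (k : ℝ) + 1 - x ≠ 0 := by linarith
    have e2 : (k : ℝ) + (N + 1) + 1 - x ≠ 0 := by linarith
    have e3 : (N : ℝ) + 1 ≠ 0 := by linarith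
    push_cast
    field_simp
    ring
  rw [hasSum_iff_tendsto_nat_of_nonneg]
  · simp_rw [key, Finset.sum_range_sub']
    have h2 : Tendsto (fun k : ℕ => C x (a + k) (N+1)) atTop (𝓝 0) := by
      have := (tendsto_add_atTop_iff_nat a).2 (C_tendsto h1 N)
      simpa [add_comm] using this
    simpa using tendsto_const_nhds.sub (h2.mul_const (1 / ((N+1 : ℕ) : ℝ)))
  · intro i
    have := (C_pos h1 (a + 1 + i) (N+1)).le
    refine mul_nonneg (div_nonneg zero_le_one ?_) this
    push_cast
    have : (0:ℝ) ≤ a := by positivity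
    have : (0:ℝ) ≤ i := by positivity
    linarith

/-- Weight `1/(k-x)`. -/
noncomputable def w (x : ℝ) (k : ℕ) : ℝ≥0∞ := ENNReal.ofReal (1 / ((k : ℝ) - x))

/-- Weight `1/k`. -/
noncomputable def u (k : ℕ) : ℝ≥0∞ := ENNReal.ofReal (1 / (k : ℝ))

/-- Connector in `ℝ≥0∞`. -/
noncomputable def D (x : ℝ) (m n : ℕ) : ℝ≥0∞ := ENNReal.ofReal (C x m n)

lemma transport {x : ℝ} (h1 : x < 1) (a N : ℕ) :
    ∑' i : ℕ, w x (a + 1 + i) * D x (a + 1 + i) (N+1) = D x a (N+1) * u (N+1) := by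
  have H := transport_real h1 a N
  have hnn : ∀ i : ℕ, 0 ≤ 1 / (((a + 1 + i : ℕ) : ℝ) - x) := by
    intro i
    refine div_nonneg zero_le_one ?_
    push_cast
    have : (0:ℝ) ≤ a := by positivity
    have : (0:ℝ) ≤ i := by positivity
    linarith
  rw [D, u, ← ENNReal.ofReal_mul (C_pos h1 _ _).le, ← H.tsum_eq,
    ENNReal.ofReal_tsum_of_nonneg (fun i => mul_nonneg (hnn i) (C_pos h1 _ _).le) H.summable]
  exact tsum_congr fun i => (ENNReal.ofReal_mul (hnn i)).symm

lemma transport' {x : ℝ} (h1 : x < 1) (a : ℕ) :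
    ∑' i : ℕ, w x (i + 1) * D x (a + 1) (i+1) = u (a+1) := by
  have := transport h1 0 a
  simp only [D, C_comm h1 _ (a+1)] at this
  simpa [add_comm, C_zero_right, D] using this

lemma chain {x : ℝ} (h1 : x < 1) (n N : ℕ) :
    ∑' ℓ : L n, (∏ i, w x (ℓ.1 i)) * D x (lst ℓ.1) (N+1) = u (N+1) ^ n := by
  induction n with
  | zero =>
    have : Unique (L 0) := ⟨⟨⟨Fin.elim0, fun a => a.elim0, fun a => a.elim0⟩⟩,
      fun a => Subtype.ext (Subsingleton.elim _ _)⟩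
    rw [tsum_fintype, Fintype.sum_unique]
    simp [lst_zero, D, C_zero_left h1]
  | succ n ih =>
    rw [tsum_L_succ n (w x) (fun k => D x k (N+1))]
    simp_rw [transport h1, ← mul_assoc]
    rw [ENNReal.tsum_mul_right, ih, pow_succ]

lemma lst_pos {n : ℕ} (ℓ : L (n+1)) : 0 < lst ℓ.1 := by
  rw [lst_succ _ ℓ.2.1]; exact ℓ.2.2 _

lemma gen {x : ℝ} (h1 : x < 1) (n : ℕ) :
    ∑' ℓ : L (n+1), (∏ i, w x (ℓ.1 i)) * u (lst ℓ.1) =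
      ∑' N : ℕ, w x (N+1) * u (N+1) ^ (n+1) := by
  have : ∀ ℓ : L (n+1), (∏ i, w x (ℓ.1 i)) * u (lst ℓ.1) =
      ∑' N : ℕ, w x (N+1) * ((∏ i, w x (ℓ.1 i)) * D x (lst ℓ.1) (N+1)) := by
    intro ℓ
    obtain ⟨a, ha⟩ := Nat.exists_eq_succ_of_ne_zero (lst_pos ℓ).ne'
    rw [ha, Nat.succ_eq_add_one, ← transport' h1 a, ← ENNReal.tsum_mul_left]
    exact tsum_congr fun N => by ring
  simp_rw [this]
  rw [ENNReal.tsum_comm]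
  simp_rw [ENNReal.tsum_mul_left, chain h1]

lemma w_expand {x : ℝ} (h0 : 0 ≤ x) (h1 : x < 1) (k : ℕ) (hk : 0 < k) :
    w x k = ∑' a : ℕ, ENNReal.ofReal x ^ a * u k ^ (a+1) := by
  have hk' : (1:ℝ) ≤ k := by exact_mod_cast hk
  have hs : HasSum (fun a : ℕ => x ^ a * (1 / (k:ℝ)) ^ (a+1)) (1 / ((k:ℝ) - x)) := by
    have := (hasSum_geometric_of_lt_one (r := x / k) (by positivity)
      (by rw [div_lt_one] <;> linarith)).mul_left (1 / (k:ℝ))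
    have e : 1 / ((k:ℝ) - x) = 1 / (k:ℝ) * (1 - x / k)⁻¹ := by
      have : (k:ℝ) - x ≠ 0 := by linarith
      field_simp
    rw [e]
    have e2 : (fun a : ℕ => x ^ a * (1 / (k:ℝ)) ^ (a+1)) =
        fun a : ℕ => 1 / (k:ℝ) * (x / k) ^ a := by
      funext a
      simp only [div_pow, pow_succ, one_pow]; field_simp
    rw [e2]
    exact this
  rw [w, ← hs.tsum_eq, ENNReal.ofReal_tsum_of_nonneg (fun a => by positivity) hs.summable]
  refine tsum_congr fun a => ?_
  rw [ENNReal.ofReal_mul (by positivity), ENNReal.ofReal_pow h0, ENNReal.ofReal_pow (by positivity), u]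

lemma prod_tsum (n : ℕ) (f : Fin n → ℕ → ℝ≥0∞) :
    ∏ i, ∑' a, f i a = ∑' a : Fin n → ℕ, ∏ i, f i (a i) := by
  induction n with
  | zero => rw [tsum_fintype, Fintype.sum_unique]; simp
  | succ n ih =>
    rw [Fin.prod_univ_succ, ih, ← (Fin.consEquiv (fun _ => ℕ)).tsum_eq, tsum_pair,
      ← ENNReal.tsum_mul_right]
    refine tsum_congr fun a => ?_
    rw [← ENNReal.tsum_mul_left]
    refine tsum_congr fun b => ?_
    simp [Fin.prod_univ_succ, Fin.consEquiv]

/-- MZV in `ℝ≥0∞`. -/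
noncomputable def Z {n : ℕ} (α : Fin n → ℕ) : ℝ≥0∞ := ∑' ℓ : L n, ∏ i, u (ℓ.1 i) ^ α i

lemma mzv_eq {n : ℕ} (α : Fin n → ℕ) : mzv α = (Z α).toReal := by
  rw [Z, ENNReal.tsum_toReal_eq]
  · refine tsum_congr fun ℓ => ?_
    rw [ENNReal.toReal_prod]
    refine Finset.prod_congr rfl fun i _ => ?_
    rw [ENNReal.toReal_pow, u, ENNReal.toReal_ofReal (by positivity)]
    simp
  · intro ℓ
    exact ENNReal.prod_ne_top fun i _ => ENNReal.pow_ne_top ENNReal.ofReal_ne_top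

/-- The exponent vector attached to `a`. -/
def up {n : ℕ} (a : Fin (n+1) → ℕ) : Fin (n+1) → ℕ :=
  fun i => a i + 1 + if i = Fin.last n then 1 else 0

lemma up_term {n : ℕ} (a : Fin (n+1) → ℕ) (ℓ : L (n+1)) :
    ∏ i, u (ℓ.1 i) ^ up a i = (∏ i, u (ℓ.1 i) ^ (a i + 1)) * u (lst ℓ.1) := by
  simp only [up, pow_add _ (_ + 1), Finset.prod_mul_distrib]
  rw [lst_succ _ ℓ.2.1]
  congr 1
  rw [Finset.prod_eq_single (Fin.last n)] <;> simp +contextual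

lemma lhs_expand {x : ℝ} (h0 : 0 ≤ x) (h1 : x < 1) (n : ℕ) :
    ∑' ℓ : L (n+1), (∏ i, w x (ℓ.1 i)) * u (lst ℓ.1) =
      ∑' a : Fin (n+1) → ℕ, ENNReal.ofReal x ^ (∑ i, a i) * Z (up a) := by
  simp_rw [Z, ← ENNReal.tsum_mul_left]
  rw [ENNReal.tsum_comm]
  refine tsum_congr fun ℓ => ?_
  have : ∀ i, w x (ℓ.1 i) = _ := fun i => w_expand h0 h1 (ℓ.1 i) (ℓ.2.2 i)
  simp_rw [this]
  rw [prod_tsum, ← ENNReal.tsum_mul_right]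
  refine tsum_congr fun a => ?_
  rw [up_term, Finset.prod_mul_distrib, Finset.prod_pow_eq_pow_sum, mul_assoc]

/-- Coefficients on the left. -/
noncomputable def S (n j : ℕ) : ℝ≥0∞ :=
  ∑' a : {a : Fin (n+1) → ℕ // ∑ i, a i = j}, Z (up a.1)

/-- Coefficients on the right. -/
noncomputable def R (m : ℕ) : ℝ≥0∞ := ∑' N : ℕ, u (N+1) ^ m

lemma series_eq {x : ℝ} (h0 : 0 ≤ x) (h1 : x < 1) (n : ℕ) :
    ∑' j : ℕ, ENNReal.ofReal x ^ j * S n j = ∑' j : ℕ, ENNReal.ofReal x ^ j * R (n + 2 + j) := by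
  have A : ∑' j : ℕ, ENNReal.ofReal x ^ j * S n j =
      ∑' a : Fin (n+1) → ℕ, ENNReal.ofReal x ^ (∑ i, a i) * Z (up a) := by
    rw [← (Equiv.sigmaFiberEquiv (fun a : Fin (n+1) → ℕ => ∑ i, a i)).tsum_eq, ENNReal.tsum_sigma']
    refine tsum_congr fun j => ?_
    rw [S, ← ENNReal.tsum_mul_left]
    refine tsum_congr fun a => ?_
    simp [Equiv.sigmaFiberEquiv, a.2]
  rw [A, ← lhs_expand h0 h1, gen h1]
  simp_rw [R, ← ENNReal.tsum_mul_left]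
  rw [ENNReal.tsum_comm]
  refine tsum_congr fun N => ?_
  rw [w_expand h0 h1 _ (Nat.succ_pos N), ← ENNReal.tsum_mul_right]
  refine tsum_congr fun j => ?_
  rw [mul_assoc, ← pow_add]
  congr 2; ring

lemma u_le (N : ℕ) : u (N+1) ≤ 1 := by
  rw [u, ENNReal.ofReal_le_one, div_le_one (by positivity)]
  push_cast
  have : (0:ℝ) ≤ N := by positivity
  linarith

lemma R_two : R 2 ≠ ∞ := by
  have hs : Summable (fun N : ℕ => (1 / ((N+1 : ℕ) : ℝ)) ^ 2) := by
    have := (summable_nat_add_iff 1).2 (Real.summable_one_div_nat_pow.2 one_lt_two)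
    simpa using this
  have : R 2 = ENNReal.ofReal (∑' N : ℕ, (1 / ((N+1 : ℕ) : ℝ)) ^ 2) := by
    rw [ENNReal.ofReal_tsum_of_nonneg (fun a => by positivity) hs]
    exact tsum_congr fun N => by rw [u, ENNReal.ofReal_pow (by positivity)]
  rw [this]; exact ENNReal.ofReal_ne_top

lemma R_le (m : ℕ) : R (2 + m) ≤ R 2 :=
  ENNReal.tsum_le_tsum fun N => pow_le_pow_right_of_le_one' (u_le N) (by omega)

lemma R_series_ne_top {x : ℝ} (_h0 : 0 ≤ x) (h1 : x < 1) (n : ℕ) :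
    ∑' j : ℕ, ENNReal.ofReal x ^ j * R (n + 2 + j) ≠ ∞ := by
  have : ∑' j : ℕ, ENNReal.ofReal x ^ j * R (n + 2 + j) ≤ (1 - ENNReal.ofReal x)⁻¹ * R 2 := by
    rw [← ENNReal.tsum_geometric, ← ENNReal.tsum_mul_right]
    refine ENNReal.tsum_le_tsum fun j => ?_
    gcongr
    rw [show n + 2 + j = 2 + (n + j) by ring]
    exact R_le _
  refine ne_top_of_le_ne_top (ENNReal.mul_ne_top ?_ R_two) this
  rw [ENNReal.inv_ne_top]
  have : ENNReal.ofReal x < 1 := by simpa using h1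
  exact (tsub_pos_of_lt this).ne'

lemma coeff_ne_top {c : ℕ → ℝ≥0∞} (h : ∀ x : ℝ, 0 ≤ x → x < 1 → ∑' j : ℕ, ENNReal.ofReal x ^ j * c j ≠ ∞)
    (j : ℕ) : c j ≠ ∞ := by
  have := ENNReal.ne_top_of_tsum_ne_top (h (1/2) (by norm_num) (by norm_num)) j
  intro hc
  rw [hc, ENNReal.mul_top] at this
  · exact this rfl
  · exact pow_ne_zero _ (by simp)

lemma hasSum_toReal {c : ℕ → ℝ≥0∞} (h : ∀ x : ℝ, 0 ≤ x → x < 1 → ∑' j : ℕ, ENNReal.ofReal x ^ j * c j ≠ ∞)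
    {x : ℝ} (h0 : 0 ≤ x) (h1 : x < 1) :
    HasSum (fun j => (c j).toReal * x ^ j) (∑' j : ℕ, ENNReal.ofReal x ^ j * c j).toReal := by
  have := ENNReal.hasSum_toReal (h x h0 h1)
  rw [ENNReal.tsum_toReal_eq (fun j => ENNReal.ne_top_of_tsum_ne_top (h x h0 h1) j)]
  convert this using 1
  funext j
  simp [ENNReal.toReal_ofReal h0, mul_comm]

lemma fps {c : ℕ → ℝ≥0∞} (h : ∀ x : ℝ, 0 ≤ x → x < 1 → ∑' j : ℕ, ENNReal.ofReal x ^ j * c j ≠ ∞) :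
    HasFPowerSeriesAt (fun x : ℝ => ∑' j, (c j).toReal * x ^ j)
      (FormalMultilinearSeries.ofScalars ℝ (fun j => (c j).toReal)) 0 := by
  rw [hasFPowerSeriesAt_iff]
  filter_upwards [Metric.ball_mem_nhds (0:ℝ) one_pos] with z hz
  have hz' : |z| < 1 := by simpa using hz
  have hs : Summable (fun j => (c j).toReal * z ^ j) := by
    refine Summable.of_norm ?_
    have := (hasSum_toReal h (abs_nonneg z) hz').summable
    simpa [abs_mul] using this
  have := hs.hasSum
  simpa [mul_comm] using this

lemma coeff_unique {c d : ℕ → ℝ≥0∞}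
    (hd : ∀ x : ℝ, 0 ≤ x → x < 1 → ∑' j : ℕ, ENNReal.ofReal x ^ j * d j ≠ ∞)
    (h : ∀ x : ℝ, 0 ≤ x → x < 1 →
      ∑' j : ℕ, ENNReal.ofReal x ^ j * c j = ∑' j : ℕ, ENNReal.ofReal x ^ j * d j) (j : ℕ) :
    c j = d j := by
  have hc : ∀ x : ℝ, 0 ≤ x → x < 1 → ∑' j : ℕ, ENNReal.ofReal x ^ j * c j ≠ ∞ :=
    fun x h0 h1 => by rw [h x h0 h1]; exact hd x h0 h1
  have F := fps hc
  have G := fps hd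
  have ev : ∀ᶠ x in 𝓝[>] (0:ℝ), (∑' j, (c j).toReal * x ^ j) = ∑' j, (d j).toReal * x ^ j := by
    filter_upwards [Ioo_mem_nhdsGT (zero_lt_one (α := ℝ))] with x hx
    rw [(hasSum_toReal hc hx.1.le hx.2).tsum_eq, (hasSum_toReal hd hx.1.le hx.2).tsum_eq,
      h x hx.1.le hx.2]
  have fr := ev.frequently.filter_mono (nhdsWithin_mono (0:ℝ) (fun x (hx : 0 < x) => hx.ne'))
  have eq := (AnalyticAt.frequently_eq_iff_eventually_eq F.analyticAt G.analyticAt).1 fr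
  have := (F.congr eq).eq_formalMultilinearSeries G
  have := congrArg (fun p => p.coeff j) this
  simp only [FormalMultilinearSeries.coeff_ofScalars] at this
  exact (ENNReal.toReal_eq_toReal_iff' (coeff_ne_top hc j) (coeff_ne_top hd j)).1 this

lemma S_eq (n j : ℕ) : S n j = R (n + 2 + j) :=
  coeff_unique (d := fun j => R (n + 2 + j)) (fun _ h0 h1 => R_series_ne_top h0 h1 n)
    (fun _ h0 h1 => series_eq h0 h1 n) j

lemma Z_one (m : ℕ) : Z ![m] = R m := by
  have : Unique (L 0) := ⟨⟨⟨Fin.elim0, fun a => a.elim0, fun a => a.elim0⟩⟩,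
      fun a => Subtype.ext (Subsingleton.elim _ _)⟩
  rw [Z, ← (eqv 0).tsum_eq, tsum_pair, tsum_fintype, Fintype.sum_unique, R]
  refine tsum_congr fun N => ?_
  simp [eqv, lst_zero, add_comm, Fin.snoc]

lemma up_sum {n : ℕ} (a : Fin (n+1) → ℕ) : ∑ i, up a i = ∑ i, a i + (n + 2) := by
  simp [up, Finset.sum_add_distrib]; ring

/-- Reindexing of exponents. -/
def expEquiv (n j : ℕ) : {a : Fin (n+1) → ℕ // ∑ i, a i = j} ≃ {v : Fin (n + 1) → ℕ //
        (∀ i, 0 < v i) ∧ (∑ i, v i) = n + 2 + j ∧ 2 ≤ v (Fin.last n)} where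
  toFun a := ⟨up a.1, fun i => by simp only [up]; omega, by rw [up_sum, a.2]; ring,
    by simp [up]⟩
  invFun v := ⟨fun i => v.1 i - 1 - if i = Fin.last n then 1 else 0, by
    have h : up (fun i => v.1 i - 1 - if i = Fin.last n then 1 else 0) = v.1 := by
      ext i
      have := v.2.1 i
      have := v.2.2.2
      simp only [up]
      split_ifs with hi
      · subst hi; omega
      · omega
    have := up_sum (fun i => v.1 i - 1 - if i = Fin.last n then 1 else 0)
    rw [h, v.2.2.1] at this
    beta_reduce
    omega⟩
  left_inv a := by ext i; simp only [up]; omega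
  right_inv v := by
    ext i
    have := v.2.1 i
    have := v.2.2.2
    simp only [up]
    split_ifs with hi
    · subst hi; omega
    · omega

end SumFormula

/-- Sum formula: for depth `n + 1 ≥ 1` and weight `m ≥ n + 2`, the sum of all
MZVs of depth `n + 1`, weight `m`, whose last entry is at least `2`, is `ζ(m)`. -/
theorem sum_formula (n m : ℕ) (h : n + 2 ≤ m) :
    (∑' α : {v : Fin (n + 1) → ℕ //
        (∀ i, 0 < v i) ∧ (∑ i, v i) = m ∧ 2 ≤ v (Fin.last n)},
      mzv α.1) = mzv ![m] := by
  obtain ⟨j, rfl⟩ := Nat.exists_eq_add_of_le h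
  have hS : ∑' α : {v : Fin (n + 1) → ℕ //
        (∀ i, 0 < v i) ∧ (∑ i, v i) = n + 2 + j ∧ 2 ≤ v (Fin.last n)}, SumFormula.Z α.1
      = SumFormula.R (n + 2 + j) := by
    rw [← SumFormula.S_eq, SumFormula.S, ← (SumFormula.expEquiv n j).tsum_eq]
    rfl
  have hR : SumFormula.R (n + 2 + j) ≠ ⊤ := by
    rw [show n + 2 + j = 2 + (n + j) by ring]
    exact ne_top_of_le_ne_top SumFormula.R_two (SumFormula.R_le _)
  simp_rw [SumFormula.mzv_eq]
  rw [SumFormula.Z_one, ← hS, ENNReal.tsum_toReal_eq]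
  exact fun α => ENNReal.ne_top_of_tsum_ne_top (hS ▸ hR) α
end

section
/- For nonnegative integers a_1, b_1, the iterated integral (1/(a_1! b_1!)) ∫_{0<s_1<s_2<1} (log((1-s_1)/(1-s_2)))^{a_1} (log(s_2/s_1))^{b_1} ds_1 ds_2 / ((1-s_1) s_2) equals the sum over all (a_1+1)-tuples of positive integers (α_0, α_1, ..., α_{a_1}) with α_0 + ... + α_{a_1} = a_1 + b_1 + 1 of ζ(α_0, α_1, ..., α_{a_1} + 1). -/
open MeasureTheory Real

/-- Compositions of `m` into `n` positive parts. -/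
def Comp (n m : ℕ) : Type := {v : Fin n → ℕ // (∀ i, 0 < v i) ∧ ∑ i, v i = m}

/-- Increase the last entry of a tuple by one. -/
def incLast {n : ℕ} (v : Fin n → ℕ) : Fin n → ℕ :=
  fun i => if (i : ℕ) = n - 1 then v i + 1 else v i


noncomputable section
open Classical

/-- reciprocal as an extended nonnegative real, with value zero at zero -/
def iv (n : ℕ) : ENNReal := ENNReal.ofReal ((n : ℝ)⁻¹)

lemma iv_zero : iv 0 = 0 := by simp [iv]

def Zt {d : ℕ} (α : Fin d → ℕ) (n : ℕ) : ENNReal :=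
  ∑' ℓ : Fin d → ℕ, if StrictMono ℓ ∧ (∀ i, 0 < ℓ i) ∧ ∀ i, ℓ i < n then
    ∏ i, (iv (ℓ i)) ^ (α i) else 0

lemma strictMono_snoc_iff {d : ℕ} (ℓ : Fin d → ℕ) (m : ℕ) :
    StrictMono (Fin.snoc ℓ m : Fin (d + 1) → ℕ) ↔ StrictMono ℓ ∧ ∀ i, ℓ i < m := by
  constructor
  · intro h
    refine ⟨fun i j hij => ?_, fun i => ?_⟩
    · have := h (Fin.castSucc_lt_castSucc_iff.2 hij)
      simpa using this
    · have := h (Fin.castSucc_lt_last i)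
      simpa using this
  · rintro ⟨h1, h2⟩ i j
    refine Fin.lastCases ?_ (fun j => ?_) j
    · refine Fin.lastCases ?_ (fun i => ?_) i
      · simp
      · intro _; simpa using h2 i
    · refine Fin.lastCases ?_ (fun i => ?_) i
      · intro h; exact absurd h (not_lt.2 (Fin.le_last _))
      · intro h; simpa using h1 (Fin.castSucc_lt_castSucc_iff.1 h)

lemma tsum_fin_succ {d : ℕ} (f : (Fin (d + 1) → ℕ) → ENNReal) :
    ∑' ℓ, f ℓ = ∑' m : ℕ, ∑' ℓ : Fin d → ℕ, f (Fin.snoc ℓ m) := by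
  rw [← (Fin.snocEquiv (fun _ : Fin (d + 1) => ℕ)).tsum_eq, ENNReal.tsum_prod']
  rfl

lemma sum_snoc_general {d : ℕ} (α : Fin d → ℕ) (k : ℕ) (p : ℕ → Prop)
    [DecidablePred p] :
    (∑' ℓ : Fin (d + 1) → ℕ, if StrictMono ℓ ∧ (∀ i, 0 < ℓ i) ∧ p (ℓ (Fin.last d)) then
      ∏ i, (iv (ℓ i)) ^ ((Fin.snoc α (k + 1) : Fin (d + 1) → ℕ) i) else 0) =
    ∑' m : ℕ, if p m then (iv m) ^ (k + 1) * Zt α m else 0 := by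
  rw [tsum_fin_succ]
  refine tsum_congr fun m => ?_
  by_cases hp : p m
  · rw [if_pos hp, Zt, ← ENNReal.tsum_mul_left]
    refine tsum_congr fun ℓ => ?_
    rcases Nat.eq_zero_or_pos m with rfl | hm
    · simp [iv_zero, Fin.forall_fin_succ']
    · simp only [strictMono_snoc_iff, Fin.forall_fin_succ', Fin.snoc_castSucc, Fin.snoc_last, hp, hm,
        and_true, Fin.prod_univ_castSucc]
      by_cases h : StrictMono ℓ ∧ (∀ i, 0 < ℓ i) ∧ ∀ i, ℓ i < m
      · rw [if_pos h, if_pos ⟨⟨h.1, h.2.2⟩, h.2.1⟩, mul_comm]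
      · rw [if_neg h, if_neg (fun h' => h ⟨h'.1.1, h'.2, h'.1.2⟩), mul_zero]
  · simp [hp]

lemma Zt_snoc {d : ℕ} (α : Fin d → ℕ) (k n : ℕ) :
    Zt (Fin.snoc α (k + 1) : Fin (d + 1) → ℕ) n =
      ∑ m ∈ Finset.range n, (iv m) ^ (k + 1) * Zt α m := by
  have h := sum_snoc_general α k (fun m => m < n)
  have h2 : (∑' m : ℕ, if m < n then (iv m) ^ (k + 1) * Zt α m else 0) =
      ∑ m ∈ Finset.range n, (iv m) ^ (k + 1) * Zt α m := by
    rw [tsum_eq_sum (s := Finset.range n)]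
    · exact Finset.sum_congr rfl fun m hm => by simp [Finset.mem_range.1 hm]
    · intro m hm; simp at hm; simp [hm]
  rw [← h2, ← h, Zt]
  refine tsum_congr fun ℓ => ?_
  refine if_congr ?_ rfl rfl
  constructor
  · rintro ⟨h1, h2, h3⟩; exact ⟨h1, h2, h3 _⟩
  · rintro ⟨h1, h2, h3⟩
    exact ⟨h1, h2, fun i => (h1.monotone (Fin.le_last i)).trans_lt h3⟩

lemma Zt_zero (α : Fin 0 → ℕ) (n : ℕ) : Zt α n = 1 := by
  rw [Zt, tsum_eq_single (default : Fin 0 → ℕ)]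
  · simp [Subsingleton.strictMono]
  · intro b hb; exact absurd (Subsingleton.elim _ _) hb

lemma tsum_split_zero (f : ℕ → ENNReal) : ∑' n, f n = f 0 + ∑' n, f (n + 1) := by
  have := (Summable.sum_add_tsum_nat_add' (f := f) (k := 1) ENNReal.summable).symm
  simpa using this

lemma comp_sum_succ {d : ℕ} (w : ℕ) (G : (Fin (d + 1) → ℕ) → ENNReal) :
    (∑' α : Fin (d + 1) → ℕ, if (∀ i, 0 < α i) ∧ ∑ i, α i = w then G α else 0) =
    ∑ k ∈ Finset.range w, ∑' α : Fin d → ℕ,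
      if (∀ i, 0 < α i) ∧ ∑ i, α i = w - 1 - k then G (Fin.snoc α (k + 1)) else 0 := by
  rw [tsum_fin_succ, tsum_split_zero, tsum_eq_sum (s := Finset.range w)]
  · have h0 : (∑' ℓ : Fin d → ℕ, if (∀ i, 0 < (Fin.snoc ℓ 0 : Fin (d + 1) → ℕ) i) ∧
        ∑ i, (Fin.snoc ℓ 0 : Fin (d + 1) → ℕ) i = w then G (Fin.snoc ℓ 0) else 0) = 0 := by
      simp [Fin.forall_fin_succ']
    rw [h0, zero_add]
    refine Finset.sum_congr rfl fun k hk => tsum_congr fun α => if_congr ?_ rfl rfl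
    have := Finset.mem_range.1 hk
    simp only [Fin.forall_fin_succ', Fin.snoc_castSucc, Fin.snoc_last, Fin.sum_univ_castSucc]
    constructor
    · rintro ⟨h1, h2⟩; exact ⟨h1.1, by omega⟩
    · rintro ⟨h1, h2⟩; exact ⟨⟨h1, by omega⟩, by omega⟩
  · intro k hk
    simp only [Finset.mem_range, not_lt] at hk
    simp only [ENNReal.tsum_eq_zero, Fin.snoc_last, Fin.sum_univ_castSucc]
    intro α
    rw [if_neg]
    rintro ⟨_, h⟩
    omega

def St (d w n : ℕ) : ENNReal :=
  ∑' α : Fin d → ℕ, if (∀ i, 0 < α i) ∧ ∑ i, α i = w then Zt α n else 0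

def Vt (a w m : ℕ) : ENNReal :=
  ∑ k ∈ Finset.range w, (iv m) ^ (k + 1) * St a (w - 1 - k) m

lemma St_succ (d w n : ℕ) : St (d + 1) w n = ∑ m ∈ Finset.range n, Vt d w m := by
  simp only [Vt]
  rw [St, comp_sum_succ, Finset.sum_comm]
  refine Finset.sum_congr rfl fun k _ => ?_
  simp only [St, ← ENNReal.tsum_mul_left]
  rw [← Summable.tsum_finsetSum (fun _ _ => ENNReal.summable)]
  refine tsum_congr fun α => ?_
  split_ifs with h
  · rw [Zt_snoc]
  · simp

lemma St_zero (w n : ℕ) : St 0 w n = if w = 0 then 1 else 0 := by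
  rw [St, tsum_eq_single (default : Fin 0 → ℕ)]
  · simp [Zt_zero, eq_comm]
  · intro b hb; exact absurd (Subsingleton.elim _ _) hb

lemma Vt_zero (a m : ℕ) : Vt a 0 m = 0 := by simp [Vt]

lemma Vt_succ (a w m : ℕ) : Vt a (w + 1) m = iv m * (St a w m + Vt a w m) := by
  rw [Vt, Finset.sum_range_succ', Vt, mul_add, Finset.mul_sum, add_comm]
  congr 1
  · simp
  · refine Finset.sum_congr rfl fun k _ => ?_
    rw [show w + 1 - 1 - (k + 1) = w - 1 - k by omega]
    ring

lemma Vt_eq_zero (a w m : ℕ) (h : w ≤ a) : Vt a w m = 0 := by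
  induction a generalizing w m with
  | zero => obtain rfl : w = 0 := by omega
            exact Vt_zero _ _
  | succ a ih =>
    induction w with
    | zero => exact Vt_zero _ _
    | succ w ihw =>
      rw [Vt_succ, St_succ, ihw (by omega), Finset.sum_eq_zero (fun j _ => ih w j (by omega))]
      simp

lemma Vt_at_zero (a w : ℕ) : Vt a w 0 = 0 := by
  simp [Vt, iv_zero]

/-- coefficients -/
def ct (a b n : ℕ) : ENNReal := Vt a (a + b + 1) n

lemma ct_zero_zero (n : ℕ) : ct 0 0 n = iv n := by
  simp [ct, Vt_succ, St_zero, Vt_zero]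

lemma ct_zero_succ (b n : ℕ) : ct 0 (b + 1) n = iv n * ct 0 b n := by
  simp [ct, Vt_succ, St_zero]

lemma ct_succ_zero (a n : ℕ) : ct (a + 1) 0 n = iv n * ∑ m ∈ Finset.range n, ct a 0 m := by
  simp only [ct]
  rw [Vt_succ, Vt_eq_zero _ _ _ (by omega), St_succ, add_zero]

lemma ct_succ_succ (a b n : ℕ) : ct (a + 1) (b + 1) n =
    iv n * (∑ m ∈ Finset.range n, ct a (b + 1) m + ct (a + 1) b n) := by
  simp only [ct]
  rw [Vt_succ, St_succ, show a + 1 + (b + 1) = a + (b + 1) + 1 by ring,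
    show a + 1 + b + 1 = a + (b + 1) + 1 by ring]

lemma ct_at_zero (a b : ℕ) : ct a b 0 = 0 := Vt_at_zero _ _

def mzvE {n : ℕ} (α : Fin n → ℕ) : ENNReal :=
  ∑' ℓ : {ℓ : Fin n → ℕ // StrictMono ℓ ∧ ∀ i, 0 < ℓ i}, ∏ i, (iv (ℓ.1 i)) ^ (α i)

lemma incLast_snoc {d : ℕ} (α : Fin d → ℕ) (k : ℕ) :
    incLast (Fin.snoc α k : Fin (d + 1) → ℕ) = Fin.snoc α (k + 1) := by
  funext i
  refine Fin.lastCases ?_ (fun i => ?_) i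
  · simp [incLast]
  · have := i.2
    simp [incLast, this.ne]

lemma mzvE_snoc {d : ℕ} (α : Fin d → ℕ) (k : ℕ) :
    mzvE (Fin.snoc α (k + 1) : Fin (d + 1) → ℕ) = ∑' m : ℕ, (iv m) ^ (k + 1) * Zt α m := by
  have h := sum_snoc_general α k (fun _ => True)
  simp only [if_true, and_true] at h
  rw [← h, mzvE]
  refine (tsum_subtype {ℓ : Fin (d + 1) → ℕ | StrictMono ℓ ∧ ∀ i, 0 < ℓ i}
    (fun ℓ => ∏ i, (iv (ℓ i)) ^ ((Fin.snoc α (k + 1) : Fin (d + 1) → ℕ) i))).trans ?_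
  refine tsum_congr fun ℓ => ?_
  simp only [Set.indicator_apply, Set.mem_ofPred_eq]

lemma comp_sum_mzvE (a b : ℕ) :
    ∑' α : Comp (a + 1) (a + b + 1), mzvE (incLast α.1) = ∑' n, ct a b n * iv n := by
  have h1 : ∑' α : Comp (a + 1) (a + b + 1), mzvE (incLast α.1) =
      ∑' α : Fin (a + 1) → ℕ, if (∀ i, 0 < α i) ∧ ∑ i, α i = a + b + 1 then
        mzvE (incLast α) else 0 := by
    have := tsum_subtype {α : Fin (a + 1) → ℕ | (∀ i, 0 < α i) ∧ ∑ i, α i = a + b + 1}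
      (fun α => mzvE (incLast α))
    refine this.trans (tsum_congr fun α => ?_)
    simp only [Set.indicator_apply, Set.mem_ofPred_eq]
  rw [h1, comp_sum_succ]
  simp only [incLast_snoc, mzvE_snoc, ct, Vt, Finset.sum_mul]
  rw [Summable.tsum_finsetSum (fun _ _ => ENNReal.summable)]
  refine Finset.sum_congr rfl fun k _ => ?_
  simp only [St, ← ENNReal.tsum_mul_left, ← ENNReal.tsum_mul_right]
  rw [ENNReal.tsum_comm]
  refine tsum_congr fun α => ?_
  split_ifs with h
  · refine tsum_congr fun m => ?_
    ring
  · simp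

lemma mzv_eq {n : ℕ} (α : Fin n → ℕ) : mzv α = (mzvE α).toReal := by
  rw [mzv, mzvE, ENNReal.tsum_toReal_eq]
  · refine tsum_congr fun ℓ => ?_
    rw [ENNReal.toReal_prod]
    refine Finset.prod_congr rfl fun i _ => ?_
    rw [ENNReal.toReal_pow, iv, ENNReal.toReal_ofReal (by positivity), inv_pow]
  · intro ℓ
    exact ENNReal.prod_ne_top fun i _ => ENNReal.pow_ne_top ENNReal.ofReal_ne_top

end
lemma iv_le_one (n : ℕ) : iv n ≤ 1 := by
  rw [iv, ENNReal.ofReal_le_one]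
  exact Nat.cast_inv_le_one n

noncomputable def Hh (n : ℕ) : ENNReal := ∑ m ∈ Finset.range n, iv m

lemma Hh_mono : Monotone Hh := fun m n h =>
  Finset.sum_le_sum_of_subset (Finset.range_mono h)

lemma sum_bound (f : ℕ → ENNReal) (C : ENNReal) (a : ℕ)
    (hf : ∀ n, f n ≤ C * (iv n * Hh n ^ a)) (n : ℕ) :
    ∑ m ∈ Finset.range n, f m ≤ C * Hh n ^ (a + 1) := by
  calc ∑ m ∈ Finset.range n, f m ≤ ∑ m ∈ Finset.range n, C * (iv m * Hh n ^ a) := by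
        refine Finset.sum_le_sum fun m hm => (hf m).trans ?_
        gcongr
        exact Hh_mono (Finset.mem_range.1 hm).le
    _ = _ := by rw [← Finset.mul_sum, ← Finset.sum_mul, pow_succ', ← Hh]

lemma ct_bound (a b : ℕ) : ∃ C : ENNReal, C ≠ ⊤ ∧ ∀ n, ct a b n ≤ C * (iv n * Hh n ^ a) := by
  induction a generalizing b with
  | zero =>
    refine ⟨1, by simp, fun n => ?_⟩
    induction b with
    | zero => simp [ct_zero_zero]
    | succ b ih =>
      rw [ct_zero_succ]
      exact (mul_le_mul_left (iv_le_one n) _).trans (by rw [one_mul]; exact ih)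
  | succ a iha =>
    induction b with
    | zero =>
      obtain ⟨C, hC, h⟩ := iha 0
      refine ⟨C, hC, fun n => ?_⟩
      rw [ct_succ_zero]
      calc _ ≤ iv n * (C * Hh n ^ (a + 1)) := by gcongr; exact sum_bound _ _ _ h n
        _ = _ := by ring
    | succ b ihb =>
      obtain ⟨C, hC, h⟩ := iha (b + 1)
      obtain ⟨D, hD, h'⟩ := ihb
      refine ⟨C + D, ENNReal.add_ne_top.2 ⟨hC, hD⟩, fun n => ?_⟩
      rw [ct_succ_succ]
      calc _ ≤ iv n * (C * Hh n ^ (a + 1) + D * (1 * Hh n ^ (a + 1))) := by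
            gcongr
            · exact sum_bound _ _ _ h n
            · refine (h' n).trans ?_
              gcongr
              exact iv_le_one n
        _ = _ := by ring

lemma Hh_le (n : ℕ) : Hh n ≤ ENNReal.ofReal (1 + Real.log n) := by
  have h1 : Hh n ≤ Hh (n + 1) := Hh_mono (Nat.le_succ n)
  refine h1.trans ?_
  rw [Hh, Finset.sum_range_succ', iv_zero, add_zero]
  simp only [iv]
  rw [← ENNReal.ofReal_sum_of_nonneg (fun _ _ => by positivity)]
  apply ENNReal.ofReal_le_ofReal
  have := harmonic_le_one_add_log n
  simpa [harmonic] using this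

lemma summable_log_pow (a : ℕ) :
    Summable (fun n : ℕ => (1 + Real.log n) ^ a * ((n : ℝ)⁻¹) ^ 2) := by
  have hs : Summable (fun n : ℕ => (n : ℝ) ^ (-(3 / 2) : ℝ)) :=
    Real.summable_nat_rpow.2 (by norm_num)
  refine summable_of_isBigO_nat hs ?_
  have h1 : (fun x : ℝ => 1 + Real.log x) =O[Filter.atTop] Real.log := by
    refine Asymptotics.IsBigO.add ?_ (Asymptotics.isBigO_refl _ _)
    exact (Real.isLittleO_const_log_atTop).isBigO
  have h2 : (fun x : ℝ => (1 + Real.log x) ^ a) =O[Filter.atTop] fun x : ℝ => x ^ (1 / 2 : ℝ) := by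
    refine (h1.pow a).trans ?_
    have := (isLittleO_log_rpow_rpow_atTop (s := 1 / 2) (a : ℝ) (by norm_num)).isBigO
    simpa using this
  have h3 : (fun x : ℝ => (1 + Real.log x) ^ a * (x⁻¹) ^ 2) =O[Filter.atTop]
      fun x : ℝ => x ^ (-(3 / 2) : ℝ) := by
    refine (h2.mul (Asymptotics.isBigO_refl (fun x : ℝ => (x⁻¹) ^ 2) _)).trans_eventuallyEq ?_
    filter_upwards [Filter.eventually_gt_atTop 0] with x hx
    rw [← Real.rpow_neg_one, ← Real.rpow_natCast, ← Real.rpow_mul hx.le, ← Real.rpow_add hx]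
    norm_num
  exact h3.comp_tendsto tendsto_natCast_atTop_atTop

lemma ct_tsum_ne_top (a b : ℕ) : ∑' n, ct a b n * iv n ≠ ⊤ := by
  obtain ⟨C, hC, h⟩ := ct_bound a b
  have hle : ∑' n, ct a b n * iv n ≤
      C * ∑' n : ℕ, ENNReal.ofReal ((1 + Real.log n) ^ a * ((n : ℝ)⁻¹) ^ 2) := by
    rw [← ENNReal.tsum_mul_left]
    refine ENNReal.tsum_le_tsum fun n => ?_
    have hl : 0 ≤ Real.log n := Real.log_natCast_nonneg n
    rw [ENNReal.ofReal_mul (by positivity), ENNReal.ofReal_pow (by positivity),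
      ENNReal.ofReal_pow (by positivity), ← iv]
    calc _ ≤ C * (iv n * (ENNReal.ofReal (1 + Real.log n)) ^ a) * iv n := by
          gcongr
          refine (h n).trans ?_
          gcongr
          exact Hh_le n
      _ = _ := by ring
  refine ne_top_of_le_ne_top (ENNReal.mul_ne_top hC ?_) hle
  exact (summable_log_pow a).tsum_ofReal_ne_top
open Set in
lemma lintegral_swap_triangle (t : ℝ) (Φ : ℝ → ℝ → ENNReal)
    (hΦ : Measurable (Function.uncurry Φ)) :
    ∫⁻ s in Ioo 0 t, ∫⁻ u in Ioo s t, Φ s u = ∫⁻ u in Ioo 0 t, ∫⁻ s in Ioo 0 u, Φ s u := by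
  have hT : MeasurableSet {p : ℝ × ℝ | 0 < p.1 ∧ p.1 < p.2 ∧ p.2 < t} := by
    refine (measurableSet_lt measurable_const measurable_fst).inter
      ((measurableSet_lt measurable_fst measurable_snd).inter
        (measurableSet_lt measurable_snd measurable_const))
  have h1 : ∫⁻ s in Ioo 0 t, ∫⁻ u in Ioo s t, Φ s u = ∫⁻ s, ∫⁻ u,
      ({p : ℝ × ℝ | 0 < p.1 ∧ p.1 < p.2 ∧ p.2 < t}.indicator (Function.uncurry Φ)) (s, u) := by
    rw [← lintegral_indicator measurableSet_Ioo]
    refine lintegral_congr fun s => ?_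
    by_cases hs : s ∈ Ioo 0 t
    · rw [indicator_of_mem hs, ← lintegral_indicator measurableSet_Ioo]
      refine lintegral_congr fun u => ?_
      have := hs.1
      simp [indicator_apply, this]
    · rw [indicator_of_notMem hs, eq_comm, lintegral_eq_zero_of_ae_eq_zero]
      refine Filter.Eventually.of_forall fun u => ?_
      apply indicator_of_notMem
      rintro ⟨h1, h2, h3⟩
      exact hs ⟨h1, h2.trans h3⟩
  have h2 : ∫⁻ u in Ioo 0 t, ∫⁻ s in Ioo 0 u, Φ s u = ∫⁻ u, ∫⁻ s,
      ({p : ℝ × ℝ | 0 < p.1 ∧ p.1 < p.2 ∧ p.2 < t}.indicator (Function.uncurry Φ)) (s, u) := by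
    rw [← lintegral_indicator measurableSet_Ioo]
    refine lintegral_congr fun u => ?_
    by_cases hs : u ∈ Ioo 0 t
    · rw [indicator_of_mem hs, ← lintegral_indicator measurableSet_Ioo]
      refine lintegral_congr fun s => ?_
      have := hs.2
      simp [indicator_apply, this]
    · rw [indicator_of_notMem hs, eq_comm, lintegral_eq_zero_of_ae_eq_zero]
      refine Filter.Eventually.of_forall fun u => ?_
      apply indicator_of_notMem
      rintro ⟨h1, h2, h3⟩
      exact hs ⟨h1.trans h2, h3⟩
  rw [h1, h2]
  exact lintegral_lintegral_swap (hΦ.indicator hT).aemeasurable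

open Set in
lemma lintegral_triangle_one (Φ : ℝ × ℝ → ENNReal) (hΦ : Measurable Φ) :
    ∫⁻ p in {s : ℝ × ℝ | 0 < s.1 ∧ s.1 < s.2 ∧ s.2 < 1}, Φ p =
      ∫⁻ u in Ioo 0 1, ∫⁻ s in Ioo 0 u, Φ (s, u) := by
  have hT : MeasurableSet {p : ℝ × ℝ | 0 < p.1 ∧ p.1 < p.2 ∧ p.2 < 1} := by
    refine (measurableSet_lt measurable_const measurable_fst).inter
      ((measurableSet_lt measurable_fst measurable_snd).inter
        (measurableSet_lt measurable_snd measurable_const))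
  rw [← lintegral_indicator hT, Measure.volume_eq_prod,
    lintegral_prod_symm _ (hΦ.indicator hT).aemeasurable, ← lintegral_indicator measurableSet_Ioo]
  refine lintegral_congr fun u => ?_
  by_cases hs : u ∈ Ioo (0 : ℝ) 1
  · rw [indicator_of_mem hs, ← lintegral_indicator measurableSet_Ioo]
    refine lintegral_congr fun s => ?_
    have := hs.2
    simp [indicator_apply, this]
  · rw [indicator_of_notMem hs, lintegral_eq_zero_of_ae_eq_zero]
    refine Filter.Eventually.of_forall fun u => ?_
    apply indicator_of_notMem
    rintro ⟨h1, h2, h3⟩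
    exact hs ⟨h1.trans h2, h3⟩

lemma lintegral_pow_Ioo (t : ℝ) (ht : 0 ≤ t) (n : ℕ) :
    ∫⁻ u in Set.Ioo 0 t, ENNReal.ofReal u ^ n = iv (n + 1) * ENNReal.ofReal t ^ (n + 1) := by
  have h1 : ∫⁻ u in Set.Ioo 0 t, ENNReal.ofReal u ^ n =
      ∫⁻ u in Set.Ioc 0 t, ENNReal.ofReal (u ^ n) := by
    rw [← Measure.restrict_congr_set (Ioo_ae_eq_Ioc (μ := volume) (a := (0 : ℝ)) (b := t))]
    refine setLIntegral_congr_fun measurableSet_Ioo fun u hu => ?_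
    exact (ENNReal.ofReal_pow hu.1.le n).symm
  have hint : IntegrableOn (fun u : ℝ => u ^ n) (Set.Ioc 0 t) :=
    (intervalIntegrable_iff_integrableOn_Ioc_of_le ht).1 (intervalIntegral.intervalIntegrable_pow n)
  rw [h1, ← ofReal_integral_eq_lintegral_ofReal hint, ← intervalIntegral.integral_of_le ht,
    integral_pow, iv, ← ENNReal.ofReal_pow ht, ← ENNReal.ofReal_mul (by positivity)]
  · congr 1
    push_cast
    simp
    ring
  · filter_upwards [ae_restrict_mem measurableSet_Ioc] with u hu
    exact pow_nonneg hu.1.le n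

lemma tsum_shift_s7 (f : ℕ → ENNReal) (h : f 0 = 0) : ∑' n, f n = ∑' n, f (n + 1) := by
  rw [tsum_split_zero, h, zero_add]

lemma series_div_u (c : ℕ → ENNReal) (hc : c 0 = 0) (t : ℝ) (ht : 0 ≤ t) :
    ∫⁻ u in Set.Ioo 0 t, (∑' n, c n * ENNReal.ofReal u ^ n) * ENNReal.ofReal u⁻¹ =
      ∑' n, iv n * c n * ENNReal.ofReal t ^ n := by
  have h1 : ∀ u ∈ Set.Ioo 0 t, (∑' n, c n * ENNReal.ofReal u ^ n) * ENNReal.ofReal u⁻¹ =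
      ∑' n, c (n + 1) * ENNReal.ofReal u ^ n := by
    intro u hu
    rw [tsum_shift_s7 _ (by simp [hc]), ← ENNReal.tsum_mul_right]
    refine tsum_congr fun n => ?_
    rw [pow_succ, mul_assoc, mul_assoc, ← ENNReal.ofReal_mul hu.1.le, mul_inv_cancel₀ hu.1.ne']
    simp
  rw [setLIntegral_congr_fun measurableSet_Ioo h1, lintegral_tsum]
  · rw [tsum_shift_s7 (fun n => iv n * c n * ENNReal.ofReal t ^ n) (by simp [hc])]
    refine tsum_congr fun n => ?_
    rw [lintegral_const_mul _ (by fun_prop), lintegral_pow_Ioo t ht]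
    ring
  · intro n; fun_prop

lemma cauchy_geom (c : ℕ → ENNReal) (x : ENNReal) :
    (∑' n, c n * x ^ n) * ∑' j, x ^ j = ∑' n, (∑ m ∈ Finset.range (n + 1), c m) * x ^ n := by
  simp only [← ENNReal.tsum_mul_right]
  simp only [← ENNReal.tsum_mul_left]
  rw [← ENNReal.tsum_prod (f := fun n j => c n * x ^ n * x ^ j)]
  rw [← Finset.HasAntidiagonal.sigmaAntidiagonalEquivProd.tsum_eq, ENNReal.tsum_sigma']
  refine tsum_congr fun n => ?_
  rw [tsum_fintype, Finset.sum_mul]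
  have := Finset.sum_coe_sort (Finset.HasAntidiagonal.antidiagonal n) (fun p : ℕ × ℕ => c p.1 * x ^ p.1 * x ^ p.2)
  refine Eq.trans this ?_
  rw [Finset.Nat.sum_antidiagonal_eq_sum_range_succ_mk]
  refine Finset.sum_congr rfl fun m hm => ?_
  have := Finset.mem_range.1 hm
  simp only
  rw [mul_assoc, ← pow_add]
  congr 2
  omega

lemma geom_ofReal (u : ℝ) (hu : 0 < u) (hu1 : u < 1) :
    ENNReal.ofReal (1 - u)⁻¹ = ∑' j : ℕ, ENNReal.ofReal u ^ j := by
  rw [ENNReal.tsum_geometric, ENNReal.ofReal_inv_of_pos (by linarith),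
    ENNReal.ofReal_sub _ hu.le, ENNReal.ofReal_one]

lemma series_div_one_sub (c : ℕ → ENNReal) (t : ℝ) (ht : 0 ≤ t) (ht1 : t ≤ 1) :
    ∫⁻ u in Set.Ioo 0 t, (∑' n, c n * ENNReal.ofReal u ^ n) * ENNReal.ofReal (1 - u)⁻¹ =
      ∑' n, (iv n * ∑ m ∈ Finset.range n, c m) * ENNReal.ofReal t ^ n := by
  have h1 : ∀ u ∈ Set.Ioo 0 t, (∑' n, c n * ENNReal.ofReal u ^ n) * ENNReal.ofReal (1 - u)⁻¹ =
      ∑' n, (∑ m ∈ Finset.range (n + 1), c m) * ENNReal.ofReal u ^ n := by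
    intro u hu
    rw [geom_ofReal u hu.1 (hu.2.trans_le ht1), cauchy_geom]
  rw [setLIntegral_congr_fun measurableSet_Ioo h1, lintegral_tsum]
  · rw [tsum_shift_s7 (fun n => (iv n * ∑ m ∈ Finset.range n, c m) * ENNReal.ofReal t ^ n) (by simp)]
    refine tsum_congr fun n => ?_
    rw [lintegral_const_mul _ (by fun_prop), lintegral_pow_Ioo t ht]
    ring
  · intro n; fun_prop

/-- the integrand -/
noncomputable def ker (f g : ℝ → ℝ) (s t : ℝ) : ENNReal :=
  ENNReal.ofReal (f (Real.log ((1 - s) / (1 - t))) * g (Real.log (t / s)) * (1 - s)⁻¹)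

noncomputable def Jt (f g : ℝ → ℝ) (t : ℝ) : ENNReal := ∫⁻ s in Set.Ioo 0 t, ker f g s t

lemma measurable_ker {f g : ℝ → ℝ} (hf : Measurable f) (hg : Measurable g) :
    Measurable (Function.uncurry (ker f g)) := by
  unfold ker Function.uncurry
  refine ENNReal.measurable_ofReal.comp ?_
  refine ((hf.comp ?_).mul (hg.comp ?_)).mul ?_
  · exact Real.measurable_log.comp (by fun_prop)
  · exact Real.measurable_log.comp (by fun_prop)
  · fun_prop

lemma measurable_ker_left {f g : ℝ → ℝ} (hf : Measurable f) (hg : Measurable g) (u : ℝ) :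
    Measurable fun s => ker f g s u := (measurable_ker hf hg).of_uncurry_right

lemma lintegral_ker_mul {f g : ℝ → ℝ} (hf : Measurable f) (hg : Measurable g) (u : ℝ)
    (r : ENNReal) : ∫⁻ s in Set.Ioo 0 u, ker f g s u * r = Jt f g u * r := by
  rw [Jt, lintegral_mul_const r (measurable_ker_left hf hg u)]

lemma ker_ftc {f f' g g' : ℝ → ℝ} (hf : ∀ x, HasDerivAt f (f' x) x)
    (hg : ∀ x, HasDerivAt g (g' x) x) (hf' : Continuous f') (hg' : Continuous g')
    (h0 : f 0 * g 0 = 0) (pf : ∀ x, 0 ≤ x → 0 ≤ f x) (pg : ∀ x, 0 ≤ x → 0 ≤ g x)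
    (pf' : ∀ x, 0 ≤ x → 0 ≤ f' x) (pg' : ∀ x, 0 ≤ x → 0 ≤ g' x)
    {s t : ℝ} (hs : 0 < s) (hst : s < t) (ht : t < 1) :
    ker f g s t = ∫⁻ u in Set.Ioo s t, (ker f' g s u * ENNReal.ofReal (1 - u)⁻¹ +
      ker f g' s u * ENNReal.ofReal u⁻¹) := by
  have cf : Continuous f := continuous_iff_continuousAt.2 fun x => (hf x).continuousAt
  have cg : Continuous g := continuous_iff_continuousAt.2 fun x => (hg x).continuousAt
  set A : ℝ → ℝ := fun u => Real.log ((1 - s) / (1 - u)) with hA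
  set B : ℝ → ℝ := fun u => Real.log (u / s) with hB
  set D : ℝ → ℝ := fun u => f' (A u) * g (B u) * (1 - s)⁻¹ * (1 - u)⁻¹ +
    f (A u) * g' (B u) * (1 - s)⁻¹ * u⁻¹ with hD
  have hs1 : 0 < 1 - s := by linarith
  have dA : ∀ u ∈ Set.Icc s t, HasDerivAt A (1 - u)⁻¹ u := by
    intro u hu
    have hu1 : 0 < 1 - u := by linarith [hu.2]
    have h1 : HasDerivAt (fun u : ℝ => (1 - s) / (1 - u)) ((1 - s) / (1 - u) ^ 2) u := by
      have := (((hasDerivAt_id u).const_sub 1).inv hu1.ne').const_mul (1 - s)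
      refine this.congr_deriv ?_
      simp only [id]
      ring
    have := h1.log (by positivity)
    convert this using 1
    field_simp
  have dB : ∀ u ∈ Set.Icc s t, HasDerivAt B u⁻¹ u := by
    intro u hu
    have hu1 : 0 < u := by linarith [hu.1]
    have h1 : HasDerivAt (fun u : ℝ => u / s) (1 / s) u := (hasDerivAt_id u).div_const s
    have := h1.log (by positivity)
    convert this using 1
    field_simp
  have cA : ContinuousOn A (Set.Icc s t) := fun u hu => (dA u hu).continuousAt.continuousWithinAt
  have cB : ContinuousOn B (Set.Icc s t) := fun u hu => (dB u hu).continuousAt.continuousWithinAt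
  have nA : ∀ u ∈ Set.Icc s t, 0 ≤ A u := by
    intro u hu
    have hu1 : 0 < 1 - u := by linarith [hu.2]
    apply Real.log_nonneg
    rw [le_div_iff₀ hu1]; linarith [hu.1]
  have nB : ∀ u ∈ Set.Icc s t, 0 ≤ B u := by
    intro u hu
    apply Real.log_nonneg
    rw [le_div_iff₀ hs]; linarith [hu.1]
  have dK : ∀ u ∈ Set.Icc s t, HasDerivAt (fun u => f (A u) * g (B u) * (1 - s)⁻¹) (D u) u := by
    intro u hu
    have h1 : HasDerivAt (fun u => f (A u)) _ u := (hf (A u)).comp u (dA u hu)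
    have h2 : HasDerivAt (fun u => g (B u)) _ u := (hg (B u)).comp u (dB u hu)
    have := (h1.mul h2).mul_const (1 - s)⁻¹
    refine this.congr_deriv ?_
    simp only [hD]
    ring
  have cD : ContinuousOn D (Set.Icc s t) := by
    have c1 : ContinuousOn (fun u : ℝ => (1 - u)⁻¹) (Set.Icc s t) :=
      ContinuousOn.inv₀ (by fun_prop) (fun u hu => by linarith [hu.2])
    have c2 : ContinuousOn (fun u : ℝ => u⁻¹) (Set.Icc s t) :=
      ContinuousOn.inv₀ (by fun_prop) (fun u hu => by linarith [hu.1])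
    have e1 := hf'.comp_continuousOn cA
    have e2 := hg'.comp_continuousOn cB
    have e3 := cf.comp_continuousOn cA
    have e4 := cg.comp_continuousOn cB
    exact (((e1.mul e4).mul continuousOn_const).mul c1).add
      (((e3.mul e2).mul continuousOn_const).mul c2)
  have hint : IntervalIntegrable D volume s t :=
    ContinuousOn.intervalIntegrable (by rwa [Set.uIcc_of_le hst.le])
  have hftc := intervalIntegral.integral_eq_sub_of_hasDerivAt
    (fun u hu => dK u (by rwa [Set.uIcc_of_le hst.le] at hu)) hint
  have hz : f (A s) * g (B s) * (1 - s)⁻¹ = 0 := by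
    simp only [hA, hB]
    rw [div_self hs1.ne', div_self hs.ne', Real.log_one, h0, zero_mul]
  rw [hz, sub_zero] at hftc
  have pos1 : ∀ u ∈ Set.Icc s t, 0 ≤ f' (A u) * g (B u) * (1 - s)⁻¹ := fun u hu =>
    mul_nonneg (mul_nonneg (pf' _ (nA u hu)) (pg _ (nB u hu))) (by positivity)
  have pos2 : ∀ u ∈ Set.Icc s t, 0 ≤ f (A u) * g' (B u) * (1 - s)⁻¹ := fun u hu =>
    mul_nonneg (mul_nonneg (pf _ (nA u hu)) (pg' _ (nB u hu))) (by positivity)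
  have q1 : ∀ u ∈ Set.Icc s t, 0 ≤ (1 - u)⁻¹ := fun u hu => inv_nonneg.2 (by linarith [hu.2])
  have q2 : ∀ u ∈ Set.Icc s t, 0 ≤ u⁻¹ := fun u hu => inv_nonneg.2 (by linarith [hu.1])
  have hk : ker f g s t = ENNReal.ofReal (f (A t) * g (B t) * (1 - s)⁻¹) := rfl
  rw [hk, ← hftc, intervalIntegral.integral_of_le hst.le,
    ofReal_integral_eq_lintegral_ofReal
      ((intervalIntegrable_iff_integrableOn_Ioc_of_le hst.le).1 hint)]
  · rw [← Measure.restrict_congr_set (Ioo_ae_eq_Ioc (μ := volume) (a := s) (b := t))]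
    refine setLIntegral_congr_fun measurableSet_Ioo fun u hu => ?_
    have hu' : u ∈ Set.Icc s t := ⟨hu.1.le, hu.2.le⟩
    simp only [hD, ker]
    rw [ENNReal.ofReal_add (mul_nonneg (pos1 u hu') (q1 u hu')) (mul_nonneg (pos2 u hu') (q2 u hu')),
      ENNReal.ofReal_mul (pos1 u hu'), ENNReal.ofReal_mul (pos2 u hu')]
  · filter_upwards [ae_restrict_mem measurableSet_Ioc] with u hu
    have hu' : u ∈ Set.Icc s t := ⟨hu.1.le, hu.2⟩
    exact add_nonneg (mul_nonneg (pos1 u hu') (q1 u hu')) (mul_nonneg (pos2 u hu') (q2 u hu'))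

lemma Jt_rec {f f' g g' : ℝ → ℝ} (hf : ∀ x, HasDerivAt f (f' x) x)
    (hg : ∀ x, HasDerivAt g (g' x) x) (hf' : Continuous f') (hg' : Continuous g')
    (h0 : f 0 * g 0 = 0) (pf : ∀ x, 0 ≤ x → 0 ≤ f x) (pg : ∀ x, 0 ≤ x → 0 ≤ g x)
    (pf' : ∀ x, 0 ≤ x → 0 ≤ f' x) (pg' : ∀ x, 0 ≤ x → 0 ≤ g' x)
    {t : ℝ} (ht : t < 1) :
    Jt f g t = (∫⁻ u in Set.Ioo 0 t, Jt f' g u * ENNReal.ofReal (1 - u)⁻¹) +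
      ∫⁻ u in Set.Ioo 0 t, Jt f g' u * ENNReal.ofReal u⁻¹ := by
  have cf : Continuous f := continuous_iff_continuousAt.2 fun x => (hf x).continuousAt
  have cg : Continuous g := continuous_iff_continuousAt.2 fun x => (hg x).continuousAt
  have m1 := measurable_ker hf'.measurable cg.measurable
  have m2 := measurable_ker cf.measurable hg'.measurable
  have M1 : Measurable (Function.uncurry fun s u : ℝ => ker f' g s u * ENNReal.ofReal (1 - u)⁻¹) :=
    m1.mul (by fun_prop)
  have M2 : Measurable (Function.uncurry fun s u : ℝ => ker f g' s u * ENNReal.ofReal u⁻¹) :=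
    m2.mul (by fun_prop)
  have e' : Jt f g t = ∫⁻ s in Set.Ioo 0 t, (∫⁻ u in Set.Ioo s t,
      (ker f' g s u * ENNReal.ofReal (1 - u)⁻¹ + ker f g' s u * ENNReal.ofReal u⁻¹)) :=
    setLIntegral_congr_fun measurableSet_Ioo fun s hs =>
      ker_ftc hf hg hf' hg' h0 pf pg pf' pg' hs.1 hs.2 ht
  have e4 : ∀ u : ℝ, (∫⁻ s in Set.Ioo 0 u,
      (ker f' g s u * ENNReal.ofReal (1 - u)⁻¹ + ker f g' s u * ENNReal.ofReal u⁻¹)) =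
      Jt f' g u * ENNReal.ofReal (1 - u)⁻¹ + Jt f g' u * ENNReal.ofReal u⁻¹ := by
    intro u
    rw [lintegral_add_left ((measurable_ker_left hf'.measurable cg.measurable u).mul_const _),
      lintegral_ker_mul hf'.measurable cg.measurable,
      lintegral_ker_mul cf.measurable hg'.measurable]
  have mJ : Measurable fun u : ℝ => ∫⁻ s in Set.Ioo 0 u,
      ker f' g s u * ENNReal.ofReal (1 - u)⁻¹ := by
    have hT : MeasurableSet {p : ℝ × ℝ | 0 < p.1 ∧ p.1 < p.2} :=
      (measurableSet_lt measurable_const measurable_fst).inter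
        (measurableSet_lt measurable_fst measurable_snd)
    have := (M1.indicator hT).lintegral_prod_left' (μ := volume)
    convert this using 2 with u
    rw [← lintegral_indicator measurableSet_Ioo]
    refine lintegral_congr fun s => ?_
    simp [Set.indicator_apply]
  rw [e', lintegral_swap_triangle t (fun s u => ker f' g s u * ENNReal.ofReal (1 - u)⁻¹ +
    ker f g' s u * ENNReal.ofReal u⁻¹) (M1.add M2), lintegral_congr e4, lintegral_add_left]
  simp only [← lintegral_ker_mul hf'.measurable cg.measurable]
  exact mJ

/-- normalized power and its derivative -/
noncomputable def Pn (n : ℕ) (x : ℝ) : ℝ := x ^ n / n.factorial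

noncomputable def Qn : ℕ → ℝ → ℝ
  | 0 => fun _ => 0
  | n + 1 => Pn n

lemma Pn_cont (n : ℕ) : Continuous (Pn n) := by unfold Pn; fun_prop

lemma Qn_cont (n : ℕ) : Continuous (Qn n) := by
  cases n with
  | zero => exact continuous_const
  | succ n => exact Pn_cont n

lemma Pn_nonneg (n : ℕ) (x : ℝ) (hx : 0 ≤ x) : 0 ≤ Pn n x := by unfold Pn; positivity

lemma Qn_nonneg (n : ℕ) (x : ℝ) (hx : 0 ≤ x) : 0 ≤ Qn n x := by
  cases n with
  | zero => exact le_refl _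
  | succ n => exact Pn_nonneg n x hx

lemma Pn_deriv (n : ℕ) (x : ℝ) : HasDerivAt (Pn n) (Qn n x) x := by
  cases n with
  | zero =>
    have : Pn 0 = fun _ => 1 := by funext x; simp [Pn]
    rw [this]
    exact hasDerivAt_const x 1
  | succ n =>
    have := (hasDerivAt_pow (n + 1) x).div_const ((n + 1).factorial : ℝ)
    refine this.congr_deriv ?_
    simp only [Qn, Pn, Nat.factorial_succ]
    push_cast
    have h : (n.factorial : ℝ) ≠ 0 := by positivity
    field_simp

lemma Pn_zero_mul (a b : ℕ) (h : a ≠ 0 ∨ b ≠ 0) : Pn a 0 * Pn b 0 = 0 := by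
  rcases h with h | h <;> simp [Pn, h]

lemma Jt_Pn_rec (a b : ℕ) (h : a ≠ 0 ∨ b ≠ 0) {t : ℝ} (ht : t < 1) :
    Jt (Pn a) (Pn b) t = (∫⁻ u in Set.Ioo 0 t, Jt (Qn a) (Pn b) u * ENNReal.ofReal (1 - u)⁻¹) +
      ∫⁻ u in Set.Ioo 0 t, Jt (Pn a) (Qn b) u * ENNReal.ofReal u⁻¹ :=
  Jt_rec (Pn_deriv a) (Pn_deriv b) (Qn_cont a) (Qn_cont b) (Pn_zero_mul a b h) (Pn_nonneg a)
    (Pn_nonneg b) (Qn_nonneg a) (Qn_nonneg b) ht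

lemma Jt_zero_left (g : ℝ → ℝ) (t : ℝ) : Jt (Qn 0) g t = 0 := by simp [Jt, ker, Qn]

lemma Jt_zero_right (f : ℝ → ℝ) (t : ℝ) : Jt f (Qn 0) t = 0 := by simp [Jt, ker, Qn]

lemma Jt_step_one {f g : ℝ → ℝ} {c : ℕ → ENNReal} {t : ℝ} (ht0 : 0 < t) (ht : t ≤ 1)
    (h : ∀ u, 0 < u → u < 1 → Jt f g u = ∑' n, c n * ENNReal.ofReal u ^ n) :
    ∫⁻ u in Set.Ioo 0 t, Jt f g u * ENNReal.ofReal (1 - u)⁻¹ =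
      ∑' n, (iv n * ∑ m ∈ Finset.range n, c m) * ENNReal.ofReal t ^ n := by
  rw [← series_div_one_sub c t ht0.le ht]
  refine setLIntegral_congr_fun measurableSet_Ioo fun u hu => ?_
  rw [h u hu.1 (hu.2.trans_le ht)]

lemma Jt_step_zero {f g : ℝ → ℝ} {c : ℕ → ENNReal} (hc : c 0 = 0) {t : ℝ} (ht0 : 0 < t)
    (ht : t ≤ 1) (h : ∀ u, 0 < u → u < 1 → Jt f g u = ∑' n, c n * ENNReal.ofReal u ^ n) :
    ∫⁻ u in Set.Ioo 0 t, Jt f g u * ENNReal.ofReal u⁻¹ =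
      ∑' n, iv n * c n * ENNReal.ofReal t ^ n := by
  rw [← series_div_u c hc t ht0.le]
  refine setLIntegral_congr_fun measurableSet_Ioo fun u hu => ?_
  rw [h u hu.1 (hu.2.trans_le ht)]

lemma Jt_base {t : ℝ} (ht0 : 0 < t) (ht : t < 1) :
    Jt (Pn 0) (Pn 0) t = ∑' n, iv n * ENNReal.ofReal t ^ n := by
  have h := series_div_one_sub (fun n => if n = 0 then 1 else 0) t ht0.le ht.le
  have h1 : ∀ x : ENNReal, ∑' n : ℕ, (if n = 0 then (1 : ENNReal) else 0) * x ^ n = 1 := by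
    intro x
    rw [tsum_eq_single 0 (by intro n hn; simp [hn])]
    simp
  simp only [h1, one_mul] at h
  have h2 : Jt (Pn 0) (Pn 0) t = ∫⁻ u in Set.Ioo 0 t, ENNReal.ofReal (1 - u)⁻¹ := by
    simp [Jt, ker, Pn]
  rw [h2, h]
  refine tsum_congr fun n => ?_
  rcases Nat.eq_zero_or_pos n with rfl | hn
  · simp [iv_zero]
  · simp [hn]

lemma Jt_eq (a b : ℕ) : ∀ t : ℝ, 0 < t → t < 1 →
    Jt (Pn a) (Pn b) t = ∑' n, ct a b n * ENNReal.ofReal t ^ n := by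
  induction a generalizing b with
  | zero =>
    induction b with
    | zero =>
      intro t h0 h1
      rw [Jt_base h0 h1]
      simp only [ct_zero_zero]
    | succ b ihb =>
      intro t h0 h1
      rw [Jt_Pn_rec 0 (b + 1) (by simp) h1]
      simp only [Jt_zero_left, zero_mul, lintegral_zero, zero_add]
      rw [show Qn (b + 1) = Pn b from rfl, Jt_step_zero (ct_at_zero _ _) h0 h1.le ihb]
      simp only [ct_zero_succ]
  | succ a iha =>
    induction b with
    | zero =>
      intro t h0 h1
      rw [Jt_Pn_rec (a + 1) 0 (by simp) h1]
      simp only [Jt_zero_right, zero_mul, lintegral_zero, add_zero]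
      rw [show Qn (a + 1) = Pn a from rfl, Jt_step_one h0 h1.le (iha 0)]
      simp only [ct_succ_zero]
    | succ b ihb =>
      intro t h0 h1
      rw [Jt_Pn_rec (a + 1) (b + 1) (by simp) h1]
      rw [show Qn (a + 1) = Pn a from rfl, show Qn (b + 1) = Pn b from rfl,
        Jt_step_one h0 h1.le (iha (b + 1)), Jt_step_zero (ct_at_zero _ _) h0 h1.le ihb,
        ← ENNReal.tsum_add]
      simp only [ct_succ_succ]
      refine tsum_congr fun n => ?_
      ring

lemma lintegral_main (a b : ℕ) :
    ∫⁻ p in {s : ℝ × ℝ | 0 < s.1 ∧ s.1 < s.2 ∧ s.2 < 1},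
      ker (Pn a) (Pn b) p.1 p.2 * ENNReal.ofReal p.2⁻¹ = ∑' n, ct a b n * iv n := by
  have m := measurable_ker (Pn_cont a).measurable (Pn_cont b).measurable
  rw [lintegral_triangle_one (fun p => ker (Pn a) (Pn b) p.1 p.2 * ENNReal.ofReal p.2⁻¹)
    (m.mul (by fun_prop))]
  have e : ∀ u : ℝ, ∫⁻ s in Set.Ioo 0 u, ker (Pn a) (Pn b) s u * ENNReal.ofReal u⁻¹ =
      Jt (Pn a) (Pn b) u * ENNReal.ofReal u⁻¹ := by
    intro u
    exact lintegral_ker_mul (Pn_cont a).measurable (Pn_cont b).measurable u _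
  simp only [e]
  rw [Jt_step_zero (ct_at_zero _ _) one_pos le_rfl (Jt_eq a b)]
  refine tsum_congr fun n => ?_
  simp [mul_comm]

theorem double_integral_eq_sum_mzv (a₁ b₁ : ℕ) :
    ((a₁.factorial : ℝ) * b₁.factorial)⁻¹ *
      ∫ s in {s : ℝ × ℝ | 0 < s.1 ∧ s.1 < s.2 ∧ s.2 < 1},
        (Real.log ((1 - s.1) / (1 - s.2))) ^ a₁ * (Real.log (s.2 / s.1)) ^ b₁ *
          ((1 - s.1) * s.2)⁻¹ =
    ∑' α : Comp (a₁ + 1) (a₁ + b₁ + 1), mzv (incLast α.1) := by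
  have hT : MeasurableSet {p : ℝ × ℝ | 0 < p.1 ∧ p.1 < p.2 ∧ p.2 < 1} := by
    refine (measurableSet_lt measurable_const measurable_fst).inter
      ((measurableSet_lt measurable_fst measurable_snd).inter
        (measurableSet_lt measurable_snd measurable_const))
  have hfin := ct_tsum_ne_top a₁ b₁
  have hr : ∑' α : Comp (a₁ + 1) (a₁ + b₁ + 1), mzv (incLast α.1) =
      (∑' n, ct a₁ b₁ n * iv n).toReal := by
    rw [← comp_sum_mzvE] at hfin ⊢
    rw [ENNReal.tsum_toReal_eq]
    · exact tsum_congr fun α => mzv_eq _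
    · exact fun α => ENNReal.ne_top_of_tsum_ne_top hfin α
  rw [hr, ← lintegral_main, ← integral_const_mul]
  have key : ∀ p ∈ {s : ℝ × ℝ | 0 < s.1 ∧ s.1 < s.2 ∧ s.2 < 1},
      0 ≤ Pn a₁ (Real.log ((1 - p.1) / (1 - p.2))) * Pn b₁ (Real.log (p.2 / p.1)) * (1 - p.1)⁻¹ ∧
      0 ≤ p.2⁻¹ := by
    rintro ⟨s, t⟩ ⟨h1, h2, h3⟩
    simp only at h1 h2 h3 ⊢
    have hA : 0 ≤ Real.log ((1 - s) / (1 - t)) := by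
      apply Real.log_nonneg
      rw [le_div_iff₀ (by linarith)]; linarith
    have hB : 0 ≤ Real.log (t / s) := by
      apply Real.log_nonneg
      rw [le_div_iff₀ h1]; linarith
    exact ⟨mul_nonneg (mul_nonneg (Pn_nonneg _ _ hA) (Pn_nonneg _ _ hB))
      (inv_nonneg.2 (by linarith)), inv_nonneg.2 (by linarith)⟩
  have heq : ∀ p : ℝ × ℝ, ((a₁.factorial : ℝ) * b₁.factorial)⁻¹ *
      ((Real.log ((1 - p.1) / (1 - p.2))) ^ a₁ * (Real.log (p.2 / p.1)) ^ b₁ *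
          ((1 - p.1) * p.2)⁻¹) =
      Pn a₁ (Real.log ((1 - p.1) / (1 - p.2))) * Pn b₁ (Real.log (p.2 / p.1)) * (1 - p.1)⁻¹ *
        p.2⁻¹ := by
    intro p
    simp only [Pn, mul_inv, div_eq_mul_inv]
    ring
  simp only [heq]
  rw [integral_eq_lintegral_of_nonneg_ae]
  · congr 1
    refine setLIntegral_congr_fun hT fun p hp => ?_
    exact ENNReal.ofReal_mul (key p hp).1
  · filter_upwards [ae_restrict_mem hT] with p hp
    exact mul_nonneg (key p hp).1 (key p hp).2
  · refine Measurable.aestronglyMeasurable ?_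
    refine ((((Pn_cont a₁).measurable.comp ?_).mul ((Pn_cont b₁).measurable.comp ?_)).mul ?_).mul ?_
    · exact Real.measurable_log.comp (by fun_prop)
    · exact Real.measurable_log.comp (by fun_prop)
    · fun_prop
    · fun_prop
end

section
/- For nonnegative integers a_1, b_1, the integral (1/(a_1! b_1!)) ∫_{0<s_1<s_2<1} (log((1-s_1)/(1-s_2)))^{a_1} (log(s_2/s_1))^{b_1} ds_1 ds_2 / ((1-s_1) s_2) equals ζ(a_1 + b_1 + 2). -/
open MeasureTheory Real

def dzD : Set (ℝ × ℝ) := {s : ℝ × ℝ | 0 < s.1 ∧ s.1 < s.2 ∧ s.2 < 1}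

noncomputable def dzF (s : ℝ × ℝ) : ℝ × ℝ :=
  (log (1 - s.1) - log (1 - s.2), log s.2 - log s.1)

noncomputable def dzF' (s : ℝ × ℝ) : ℝ × ℝ →L[ℝ] ℝ × ℝ :=
  (Matrix.toLin (.finTwoProd ℝ) (.finTwoProd ℝ)
    !![-(1 - s.1)⁻¹, (1 - s.2)⁻¹; -s.1⁻¹, s.2⁻¹]).toContinuousLinearMap

theorem dzF'_det (s : ℝ × ℝ) :
    (dzF' s).det = -(1 - s.1)⁻¹ * s.2⁻¹ + (1 - s.2)⁻¹ * s.1⁻¹ := by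
  unfold dzF'
  simp only [LinearMap.det_toContinuousLinearMap, LinearMap.det_toLin, Matrix.det_fin_two_of]
  ring

theorem dzF_hasFDerivAt (s : ℝ × ℝ) (hs : s ∈ dzD) : HasFDerivAt dzF (dzF' s) s := by
  obtain ⟨h0, h1, h2⟩ := hs
  unfold dzF'
  rw [Matrix.toLin_finTwoProd_toContinuousLinearMap]
  have e1 : HasDerivAt (fun x : ℝ => log (1 - x)) (-(1 - s.1)⁻¹) s.1 := by
    have := ((hasDerivAt_id s.1).const_sub 1).log (by simp; linarith)
    convert! this using 1
    simp [div_eq_mul_inv]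
  have e2 : HasDerivAt (fun x : ℝ => log (1 - x)) (-(1 - s.2)⁻¹) s.2 := by
    have := ((hasDerivAt_id s.2).const_sub 1).log (by simp; linarith)
    convert! this using 1
    simp [div_eq_mul_inv]
  have e3 := Real.hasDerivAt_log (x := s.1) (by linarith)
  have e4 := Real.hasDerivAt_log (x := s.2) (by linarith)
  convert!
    HasFDerivAt.prodMk (𝕜 := ℝ)
      ((e1.comp_hasFDerivAt s hasFDerivAt_fst).sub (e2.comp_hasFDerivAt s hasFDerivAt_snd))
      ((e4.comp_hasFDerivAt s hasFDerivAt_snd).sub (e3.comp_hasFDerivAt s hasFDerivAt_fst)) using 2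
  · simp [neg_smul _ (ContinuousLinearMap.fst ℝ ℝ ℝ)]
  · simp [sub_eq_add_neg, add_comm, neg_smul _ (ContinuousLinearMap.fst ℝ ℝ ℝ)]

theorem dz_exp {s : ℝ × ℝ} (hs : s ∈ dzD) :
    exp (dzF s).1 = (1 - s.1) / (1 - s.2) ∧ exp (dzF s).2 = s.2 / s.1 := by
  obtain ⟨h0, h1, h2⟩ := hs
  simp only [dzF]
  constructor
  · rw [exp_sub, exp_log (by linarith), exp_log (by linarith)]
  · rw [exp_sub, exp_log (by linarith), exp_log (by linarith)]

theorem dz_injOn : Set.InjOn dzF dzD := by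
  intro s hs t ht h
  obtain ⟨a1, a2⟩ := dz_exp hs
  obtain ⟨b1, b2⟩ := dz_exp ht
  rw [h, b1] at a1
  rw [h, b2] at a2
  obtain ⟨h0, h1, h2⟩ := hs
  obtain ⟨k0, k1, k2⟩ := ht
  have n1 : 1 - s.2 ≠ 0 := by linarith
  have n2 : 1 - t.2 ≠ 0 := by linarith
  rw [div_eq_div_iff n2 n1] at a1
  rw [div_eq_div_iff k0.ne' h0.ne'] at a2
  have e : (s.1 - t.1) * (t.2 - t.1) = 0 := by
    have hh : (s.1 - t.1) * (t.2 - t.1) * (s.2 - s.1) = 0 := by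
      grind
    rcases mul_eq_zero.1 hh with h | h
    · exact h
    · linarith
  have e1 : s.1 = t.1 := by
    rcases mul_eq_zero.1 e with h | h <;> linarith
  have e2 : s.2 = t.2 := by
    rw [e1] at a2
    exact (mul_right_cancel₀ k0.ne' a2).symm
  exact Prod.ext e1 e2

theorem dz_image : dzF '' dzD = Set.Ioi 0 ×ˢ Set.Ioi 0 := by
  ext p
  constructor
  · rintro ⟨s, ⟨h0, h1, h2⟩, rfl⟩
    simp only [dzF, Set.mem_prod, Set.mem_Ioi, sub_pos]
    exact ⟨Real.log_lt_log (by linarith) (by linarith), Real.log_lt_log h0 h1⟩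
  · rintro ⟨hx, hy⟩
    obtain ⟨x, y⟩ := p
    simp only [Set.mem_Ioi] at hx hy
    have X : 1 < exp x := by simpa using hx
    have Y : 1 < exp y := by simpa using hy
    have XY : 0 < exp x * exp y - 1 := by nlinarith
    have X0 : 0 < exp x - 1 := by linarith
    have Y0 : 0 < exp y - 1 := by linarith
    have hA : 0 < (exp x - 1) / (exp x * exp y - 1) := by positivity
    have hB : 1 - (exp x - 1) / (exp x * exp y - 1) =
        exp x * ((exp y - 1) / (exp x * exp y - 1)) := by
      field_simp; ring
    have hC : 1 - exp y * ((exp x - 1) / (exp x * exp y - 1)) =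
        (exp y - 1) / (exp x * exp y - 1) := by
      have := XY.ne'
      rw [← mul_div_assoc, eq_div_iff this, sub_mul, div_mul_cancel₀ _ this]; ring
    have hC0 : 0 < (exp y - 1) / (exp x * exp y - 1) := by positivity
    refine ⟨((exp x - 1) / (exp x * exp y - 1), exp y * ((exp x - 1) / (exp x * exp y - 1))),
      ⟨hA, ?_, ?_⟩, ?_⟩
    · simp only; nlinarith
    · simp only; linarith
    · simp only [dzF]
      rw [hB, hC, log_mul (exp_pos x).ne' hC0.ne', log_mul (exp_pos y).ne' hA.ne']
      simp

theorem dz_measurable : MeasurableSet dzD := by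
  have : IsOpen dzD := (isOpen_lt continuous_const continuous_fst).inter
    ((isOpen_lt continuous_fst continuous_snd).inter (isOpen_lt continuous_snd continuous_const))
  exact this.measurableSet

theorem dz_change (a b : ℕ) :
    ∫ s in dzD, (Real.log ((1 - s.1) / (1 - s.2))) ^ a * (Real.log (s.2 / s.1)) ^ b *
          ((1 - s.1) * s.2)⁻¹ =
    ∫ p in (Set.Ioi (0:ℝ) ×ˢ Set.Ioi (0:ℝ)), p.1 ^ a * p.2 ^ b * (exp p.1 * exp p.2 - 1)⁻¹ := by
  rw [← dz_image, integral_image_eq_integral_abs_det_fderiv_smul volume dz_measurable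
    (fun s hs => (dzF_hasFDerivAt s hs).hasFDerivWithinAt) dz_injOn]
  refine setIntegral_congr_fun dz_measurable fun s hs => ?_
  obtain ⟨e1, e2⟩ := dz_exp hs
  simp only [e1, e2, dzF'_det]
  obtain ⟨h0, h1, h2⟩ := hs
  have n1 : 0 < 1 - s.2 := by linarith
  have n2 : 0 < 1 - s.1 := by linarith
  have n3 : 0 < s.2 := by linarith
  have n4 : 0 < s.2 - s.1 := by linarith
  have hd : -(1 - s.1)⁻¹ * s.2⁻¹ + (1 - s.2)⁻¹ * s.1⁻¹ =
      (s.2 - s.1) / ((1 - s.1) * s.2 * ((1 - s.2) * s.1)) := by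
    field_simp; ring
  have hd2 : (1 - s.1) / (1 - s.2) * (s.2 / s.1) - 1 = (s.2 - s.1) / ((1 - s.2) * s.1) := by
    field_simp; ring
  rw [hd, hd2, abs_of_pos (by positivity), log_div n2.ne' n1.ne', log_div n3.ne' h0.ne']
  simp only [dzF, smul_eq_mul]
  field_simp

theorem dz_gamma (a : ℕ) (n : ℕ) :
    ∫ x in Set.Ioi (0:ℝ), x ^ a * exp (-((n + 1 : ℝ) * x)) =
      a.factorial * (((n + 1 : ℝ)) ^ (a + 1))⁻¹ := by
  have := integral_rpow_mul_exp_neg_mul_Ioi (a := a + 1) (r := n + 1) (by positivity)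
    (by positivity)
  simp only [add_sub_cancel_right, rpow_natCast] at this
  rw [this, Real.Gamma_nat_eq_factorial]
  have h : ((a : ℝ) + 1) = ((a + 1 : ℕ) : ℝ) := by push_cast; rfl
  rw [h, rpow_natCast]
  simp [mul_comm]

theorem dz_gamma_int (a : ℕ) (n : ℕ) :
    Integrable (fun x : ℝ => x ^ a * exp (-((n + 1 : ℝ) * x)))
      (volume.restrict (Set.Ioi (0:ℝ))) := by
  apply Integrable.of_integral_ne_zero
  rw [dz_gamma]
  positivity

theorem dz_sum (a b : ℕ) :
    ∫ p in (Set.Ioi (0:ℝ) ×ˢ Set.Ioi (0:ℝ)), p.1 ^ a * p.2 ^ b * (exp p.1 * exp p.2 - 1)⁻¹ =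
    ∑' n : ℕ, (a.factorial : ℝ) * b.factorial * (((n + 1 : ℝ)) ^ (a + b + 2))⁻¹ := by
  let F : ℕ → ℝ × ℝ → ℝ := fun n p =>
    (p.1 ^ a * exp (-((n + 1 : ℝ) * p.1))) * (p.2 ^ b * exp (-((n + 1 : ℝ) * p.2)))
  have hFi : ∀ n, ∫ p in (Set.Ioi (0:ℝ) ×ˢ Set.Ioi (0:ℝ)), F n p =
      (a.factorial : ℝ) * b.factorial * (((n + 1 : ℝ)) ^ (a + b + 2))⁻¹ := by
    intro n
    have := setIntegral_prod_mul (μ := (volume : Measure ℝ)) (ν := (volume : Measure ℝ))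
      (fun x : ℝ => x ^ a * exp (-((n + 1 : ℝ) * x)))
      (fun x : ℝ => x ^ b * exp (-((n + 1 : ℝ) * x))) (Set.Ioi 0) (Set.Ioi 0)
    rw [dz_gamma, dz_gamma] at this
    refine Eq.trans this ?_
    have hn : (n + 1 : ℝ) ≠ 0 := by positivity
    field_simp
    ring
  have hint : ∀ n, Integrable (F n) (volume.restrict (Set.Ioi (0:ℝ) ×ˢ Set.Ioi (0:ℝ))) := by
    intro n
    apply Integrable.of_integral_ne_zero
    rw [hFi]
    positivity
  have hms : MeasurableSet (Set.Ioi (0:ℝ) ×ˢ Set.Ioi (0:ℝ)) :=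
    measurableSet_Ioi.prod measurableSet_Ioi
  have hsum : Summable fun n : ℕ => ∫ p in (Set.Ioi (0:ℝ) ×ˢ Set.Ioi (0:ℝ)), ‖F n p‖ := by
    have : ∀ n : ℕ, ∫ p in (Set.Ioi (0:ℝ) ×ˢ Set.Ioi (0:ℝ)), ‖F n p‖ =
        (a.factorial : ℝ) * b.factorial * (((n + 1 : ℝ)) ^ (a + b + 2))⁻¹ := by
      intro n
      rw [← hFi]
      refine setIntegral_congr_fun hms fun p hp => ?_
      obtain ⟨h1, h2⟩ := hp
      simp only [Set.mem_Ioi] at h1 h2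
      exact Real.norm_of_nonneg (by simp only [F]; positivity)
    simp only [this]
    apply Summable.mul_left
    have := (summable_nat_add_iff 1).2
      (Real.summable_nat_pow_inv (p := a + b + 2) |>.2 (by omega))
    simpa using this
  have := hasSum_integral_of_summable_integral_norm hint hsum
  simp only [hFi] at this
  rw [this.tsum_eq]
  refine setIntegral_congr_fun hms fun p hp => ?_
  obtain ⟨h1, h2⟩ := hp
  simp only [Set.mem_Ioi] at h1 h2
  have hr : exp (-(p.1 + p.2)) < 1 := by simp; linarith
  have hg := (hasSum_geometric_of_lt_one (exp_pos (-(p.1 + p.2))).le hr).mul_left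
    (p.1 ^ a * p.2 ^ b * exp (-(p.1 + p.2)))
  have hF : ∀ n : ℕ, F n p =
      p.1 ^ a * p.2 ^ b * exp (-(p.1 + p.2)) * exp (-(p.1 + p.2)) ^ n := by
    intro n
    simp only [F]
    rw [← exp_nat_mul]
    have : exp (-(p.1 + p.2)) * exp (n * -(p.1 + p.2)) =
      exp (-((n + 1 : ℝ) * p.1)) * exp (-((n + 1 : ℝ) * p.2)) := by
      rw [← exp_add, ← exp_add]; congr 1; ring
    rw [mul_assoc _ (exp _) (exp _), this]; ring
  simp only [hF]
  rw [hg.tsum_eq, mul_assoc _ (exp _) _]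
  congr 1
  rw [← exp_add]
  rw [exp_neg] at hr ⊢
  have h0 := exp_pos (p.1 + p.2)
  have h1' : 0 < exp (p.1 + p.2) - 1 := by
    have : 1 < exp (p.1 + p.2) := by simp; linarith
    linarith
  have h2' : 1 - (exp (p.1 + p.2))⁻¹ = (exp (p.1 + p.2) - 1) / exp (p.1 + p.2) := by
    field_simp
  rw [h2']
  field_simp

def dzEquiv : ℕ ≃ {ℓ : Fin 1 → ℕ // StrictMono ℓ ∧ ∀ i, 0 < ℓ i} where
  toFun n := ⟨fun _ => n + 1, Subsingleton.strictMono _, fun _ => Nat.succ_pos _⟩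
  invFun ℓ := ℓ.1 0 - 1
  left_inv n := by simp
  right_inv ℓ := by
    apply Subtype.ext
    funext i
    have := ℓ.2.2 0
    have hi : i = 0 := Subsingleton.elim _ _
    subst hi
    simp only
    omega

theorem dz_mzv (m : ℕ) : mzv ![m] = ∑' n : ℕ, (((n + 1 : ℝ)) ^ m)⁻¹ := by
  unfold mzv
  rw [← dzEquiv.tsum_eq]
  simp [dzEquiv]

theorem double_integral_eq_zeta (a₁ b₁ : ℕ) :
    ((a₁.factorial : ℝ) * b₁.factorial)⁻¹ *
      ∫ s in {s : ℝ × ℝ | 0 < s.1 ∧ s.1 < s.2 ∧ s.2 < 1},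
        (Real.log ((1 - s.1) / (1 - s.2))) ^ a₁ * (Real.log (s.2 / s.1)) ^ b₁ *
          ((1 - s.1) * s.2)⁻¹ =
    mzv ![a₁ + b₁ + 2] := by
  have h := dz_change a₁ b₁
  unfold dzD at h
  rw [h, dz_sum, dz_mzv, tsum_mul_left, ← mul_assoc, inv_mul_cancel₀ (by positivity), one_mul]
end
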